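/- For every b > 0, every integer d ≥ 3 and every real p with 1/(d-1) < p < 1 there exist c, C, δ, ε, R > 0 such that: if 𝒢 = (V,E) is a regular (b,d)-expander on n vertices with girth at least R, then there exists a matching M ⊆ E with |M| ≥ δn such that the graph 𝒢₀ = (V, E∖M) satisfies: the bond percolation G₀ ∼ (𝒢₀)_p contains a connected component with at least εn vertices with probability at least 1 − C·exp(−c n). -/

import Mathlib

open scoped Classical symmDiff

noncomputable section

namespace Percolation

variable {V : Type} [Fintype V] [DecidableEq V]

/-- The edge set of `G` as a finset. -/
noncomputable def edgeFinset' (G : SimpleGraph V) : Finset (Sym2 V) :=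
  Finset.univ.filter (· ∈ G.edgeSet)

/-- Probability that bond percolation on `G` with parameter `p` produces a spanning
subgraph satisfying `P`. -/
noncomputable def percProb (G : SimpleGraph V) (p : ℝ) (P : SimpleGraph V → Prop) : ℝ :=
  ∑ s ∈ (edgeFinset' G).powerset,
    (p ^ s.card * (1 - p) ^ ((edgeFinset' G).card - s.card)) *
      (if P (SimpleGraph.fromEdgeSet (↑s)) then 1 else 0)

/-- Joint probability for two independent bond percolations on `G`. -/
noncomputable def percProb2 (G : SimpleGraph V) (p₁ p₂ : ℝ)
    (P : SimpleGraph V → SimpleGraph V → Prop) : ℝ :=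
  ∑ s ∈ (edgeFinset' G).powerset, ∑ t ∈ (edgeFinset' G).powerset,
    (p₁ ^ s.card * (1 - p₁) ^ ((edgeFinset' G).card - s.card)) *
    (p₂ ^ t.card * (1 - p₂) ^ ((edgeFinset' G).card - t.card)) *
      (if P (SimpleGraph.fromEdgeSet (↑s)) (SimpleGraph.fromEdgeSet (↑t)) then 1 else 0)

/-- Number of edges of `G` joining `S` to its complement. -/
noncomputable def cutCard (G : SimpleGraph V) (S : Finset V) : ℕ :=
  ((edgeFinset' G).filter (fun e => ∃ x ∈ S, ∃ y, y ∉ S ∧ e = s(x, y))).card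

/-- `G` is a `(b,d)`-expander: max degree at most `d`, and every vertex set of size at most
`n/2` has at least `b|S|` edges to its complement. -/
def IsExpander (G : SimpleGraph V) (b : ℝ) (d : ℕ) : Prop :=
  (∀ v, (G.neighborSet v).ncard ≤ d) ∧
  ∀ S : Finset V, (S.card : ℝ) ≤ Fintype.card V / 2 → b * S.card ≤ cutCard G S

/-- `G` is a regular `(b,d)`-expander. -/
def IsRegularExpander (G : SimpleGraph V) (b : ℝ) (d : ℕ) : Prop :=
  IsExpander G b d ∧ ∀ v, (G.neighborSet v).ncard = d

/-- The vertices of the connected component `c` of `G`. -/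
noncomputable def compVerts (G : SimpleGraph V) (c : G.ConnectedComponent) : Finset V :=
  Finset.univ.filter (fun v => G.connectedComponentMk v = c)

/-- The edges of the connected component `c` of `G`. -/
noncomputable def compEdges (G : SimpleGraph V) (c : G.ConnectedComponent) : Finset (Sym2 V) :=
  (edgeFinset' G).filter (fun e => ∀ v ∈ e, G.connectedComponentMk v = c)

/-- `c` is a largest connected component of `G`. -/
def IsLargestComp (G : SimpleGraph V) (c : G.ConnectedComponent) : Prop :=
  ∀ c' : G.ConnectedComponent, (compVerts G c').card ≤ (compVerts G c).card

/-- The 2-core of the connected component `c` of `G` : the maximal subgraph of `G`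
supported inside `c` all of whose vertices have degree at least 2. -/
noncomputable def twoCoreComp (G : SimpleGraph V) (c : G.ConnectedComponent) : SimpleGraph V :=
  sSup {H : SimpleGraph V | H ≤ G ∧ (∀ v ∈ H.support, G.connectedComponentMk v = c) ∧
    ∀ v ∈ H.support, 2 ≤ (H.neighborSet v).ncard}

/-- The event `A^R_{x,y}(H)`: the connected component of `y` in `H` with the edge `xy`
removed (if present) has at least `R` vertices. -/
def eventA (H : SimpleGraph V) (R : ℕ) (x y : V) : Prop :=
  R ≤ (compVerts (H.deleteEdges {s(x, y)})
        ((H.deleteEdges {s(x, y)}).connectedComponentMk y)).card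

/-- `E₁(H)`: edges `xy` of `H` such that `A^R_{x,y}` or `A^R_{y,x}` holds. -/
noncomputable def E1set (H : SimpleGraph V) (R : ℕ) : Finset (Sym2 V) :=
  (edgeFinset' H).filter (fun e => ∃ x y, e = s(x, y) ∧ (eventA H R x y ∨ eventA H R y x))

/-- `V₁(H)`: vertices `x` such that for some `y`, `xy ∈ E(H)` and `A^R_{x,y}` holds. -/
noncomputable def V1set (H : SimpleGraph V) (R : ℕ) : Finset V :=
  Finset.univ.filter (fun x => ∃ y, H.Adj x y ∧ eventA H R x y)

/-- `E₂(H)`: edges `xy` of `H` such that both `A^R_{x,y}` and `A^R_{y,x}` hold. -/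
noncomputable def E2set (H : SimpleGraph V) (R : ℕ) : Finset (Sym2 V) :=
  (edgeFinset' H).filter (fun e => ∃ x y, e = s(x, y) ∧ eventA H R x y ∧ eventA H R y x)

/-- `V₂(H)`: vertices incident to an edge of `E₂(H)`. -/
noncomputable def V2set (H : SimpleGraph V) (R : ℕ) : Finset V :=
  Finset.univ.filter (fun x => ∃ e ∈ E2set H R, x ∈ e)

/-- `V̄₁(H)`: vertices `y` such that `A^R_{x,y}(H)` holds for some `x`. -/
noncomputable def Vbar1 (H : SimpleGraph V) (R : ℕ) : Finset V :=
  Finset.univ.filter (fun y => ∃ x, eventA H R x y)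

/-- `S` is `k`-thick in `H`: a union of pairwise disjoint subsets, each of size at least
`k`, each inducing a connected subgraph of `H`. -/
def IsThick (H : SimpleGraph V) (k : ℕ) (S : Finset V) : Prop :=
  ∃ P : Finset (Finset V),
    (∀ T ∈ P, k ≤ T.card ∧ (H.induce (↑T : Set V)).Connected) ∧
    (↑P : Set (Finset V)).PairwiseDisjoint id ∧ S = P.biUnion id

/-- `S` is a separator of `K`. -/
def IsSeparator {W : Type} [Fintype W] (K : SimpleGraph W) (S : Finset W) : Prop :=
  ∃ A B : Finset W, Disjoint A B ∧ Disjoint A S ∧ Disjoint B S ∧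
    (∀ w, w ∈ A ∨ w ∈ B ∨ w ∈ S) ∧
    (∀ a ∈ A, ∀ b ∈ B, ¬ K.Adj a b) ∧
    3 * A.card ≤ 2 * Fintype.card W ∧ 3 * B.card ≤ 2 * Fintype.card W

/-!
The percolation is realized as two independent rounds with parameters `p₁` and `p₂`, where
`1 / (d - 1) < p₁` and `1 - (1 - p₁) * (1 - p₂) = p`. Up to distance about `k`, and away from `M`,
a graph of girth more than `k` looks like a `d`-regular tree, on which `p₁`-percolation is
supercritical, so every such vertex has a cluster of size at least `k` with probability bounded
below. Opening or closing one edge changes at most `2 * k` memberships in a cluster of size at least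
`k`, so by bounded differences linearly many vertices lie in such clusters, up to an exponentially
small probability. There are at most `n / k` of these clusters. If no giant component appeared after
the second round, they could be split into two families covering linearly many vertices each and
not joined by the second round. By expansion, two given families are joined by linearly many
edge-disjoint paths of bounded length, so the second round misses all of them with probability at
most `exp (-γ * n)`, and `k` is chosen so large that this beats the `2 ^ (n / k)` possible splits.
-/

section RandomSubsets

variable {α : Type*}

/-- The expectation of `f s`, where `s` is the random subset of `F` that contains each element
independently with probability `p`. -/
def subsetExp (F : Finset α) (p : ℝ) (f : Finset α → ℝ) : ℝ :=
  ∑ s ∈ F.powerset, (p ^ s.card * (1 - p) ^ (F.card - s.card)) * f s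

/-- The probability of the event `A` for the random subset of `F` that contains each element
independently with probability `p`. -/
def subsetProb (F : Finset α) (p : ℝ) (A : Finset α → Prop) : ℝ :=
  subsetExp F p fun s => if A s then 1 else 0

lemma subsetExp_empty (p : ℝ) (f : Finset α → ℝ) : subsetExp ∅ p f = f ∅ := by
  simp [subsetExp]

lemma subsetExp_congr {F : Finset α} {p : ℝ} {f g : Finset α → ℝ}
    (h : ∀ s ⊆ F, f s = g s) : subsetExp F p f = subsetExp F p g :=
  Finset.sum_congr rfl fun s hs => by rw [h s (Finset.mem_powerset.1 hs)]

lemma subsetExp_mono {F : Finset α} {p : ℝ} (hp₀ : 0 ≤ p) (hp₁ : p ≤ 1)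
    {f g : Finset α → ℝ} (h : ∀ s ⊆ F, f s ≤ g s) : subsetExp F p f ≤ subsetExp F p g := by
  refine Finset.sum_le_sum fun s hs => ?_
  have : 0 ≤ 1 - p := by linarith
  exact mul_le_mul_of_nonneg_left (h s (Finset.mem_powerset.1 hs)) (by positivity)

lemma subsetExp_const (F : Finset α) (p c : ℝ) : subsetExp F p (fun _ => c) = c := by
  rw [subsetExp, ← Finset.sum_mul, Finset.sum_pow_mul_eq_add_pow, add_sub_cancel, one_pow, one_mul]

lemma subsetExp_const_mul (F : Finset α) (p c : ℝ) (f : Finset α → ℝ) :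
    subsetExp F p (fun s => c * f s) = c * subsetExp F p f := by
  simp only [subsetExp, Finset.mul_sum, mul_left_comm]

lemma subsetExp_add (F : Finset α) (p : ℝ) (f g : Finset α → ℝ) :
    subsetExp F p (fun s => f s + g s) = subsetExp F p f + subsetExp F p g := by
  simp only [subsetExp, mul_add, Finset.sum_add_distrib]

lemma subsetExp_sum {ι : Type*} (T : Finset ι) (F : Finset α) (p : ℝ) (f : ι → Finset α → ℝ) :
    subsetExp F p (fun s => ∑ i ∈ T, f i s) = ∑ i ∈ T, subsetExp F p (f i) := by
  simp only [subsetExp, Finset.mul_sum, Finset.sum_comm (s := T)]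

lemma subsetProb_mono {F : Finset α} {p : ℝ} (hp₀ : 0 ≤ p) (hp₁ : p ≤ 1)
    {A B : Finset α → Prop} (h : ∀ s ⊆ F, A s → B s) : subsetProb F p A ≤ subsetProb F p B := by
  refine subsetExp_mono hp₀ hp₁ fun s hs => ?_
  by_cases hA : A s
  · rw [if_pos hA, if_pos (h s hs hA)]
  · rw [if_neg hA]
    split_ifs <;> norm_num

lemma subsetProb_nonneg (F : Finset α) {p : ℝ} (hp₀ : 0 ≤ p) (hp₁ : p ≤ 1)
    (A : Finset α → Prop) : 0 ≤ subsetProb F p A := by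
  rw [← subsetExp_const F p 0]
  exact subsetExp_mono hp₀ hp₁ fun s _ => by split_ifs <;> norm_num

lemma subsetProb_eq_one {F : Finset α} (p : ℝ) {A : Finset α → Prop} (h : ∀ s ⊆ F, A s) :
    subsetProb F p A = 1 :=
  (subsetExp_congr fun s hs => if_pos (h s hs)).trans (subsetExp_const F p 1)

lemma subsetProb_not (F : Finset α) (p : ℝ) (A : Finset α → Prop) :
    subsetProb F p (fun s => ¬A s) = 1 - subsetProb F p A := by
  rw [eq_sub_iff_add_eq, subsetProb, subsetProb, ← subsetExp_add, ← subsetExp_const F p 1]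
  exact subsetExp_congr fun s _ => by
    by_cases h : A s <;> simp [h, subsetExp_const]

lemma subsetProb_le_one (F : Finset α) {p : ℝ} (hp₀ : 0 ≤ p) (hp₁ : p ≤ 1)
    (A : Finset α → Prop) : subsetProb F p A ≤ 1 := by
  linarith [subsetProb_not F p A, subsetProb_nonneg F hp₀ hp₁ fun s => ¬A s]

lemma subsetProb_exists_le {ι : Type*} (T : Finset ι) (F : Finset α) {p : ℝ} (hp₀ : 0 ≤ p)
    (hp₁ : p ≤ 1) (A : ι → Finset α → Prop) :
    subsetProb F p (fun s => ∃ i ∈ T, A i s) ≤ ∑ i ∈ T, subsetProb F p (A i) := by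
  simp only [subsetProb, ← subsetExp_sum]
  refine subsetExp_mono hp₀ hp₁ fun s _ => ?_
  have hnonneg : ∀ i ∈ T, (0 : ℝ) ≤ if A i s then 1 else 0 := fun i _ => by
    split_ifs <;> norm_num
  split_ifs with h
  · obtain ⟨i, hi, hAi⟩ := h
    simpa [hAi] using Finset.single_le_sum hnonneg hi
  · exact Finset.sum_nonneg hnonneg

lemma subsetProb_superset_self (E : Finset α) (p : ℝ) :
    subsetProb E p (fun s => E ⊆ s) = p ^ E.card := by
  rw [subsetProb, subsetExp, Finset.sum_eq_single_of_mem E (Finset.mem_powerset_self E)]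
  · simp
  · intro s hs hne
    rw [if_neg fun h => hne ((Finset.mem_powerset.1 hs).antisymm h), mul_zero]

section DecidableEq

variable [DecidableEq α]

lemma subsetExp_insert {F : Finset α} {a : α} (ha : a ∉ F) (p : ℝ) (f : Finset α → ℝ) :
    subsetExp (insert a F) p f =
      p * subsetExp F p (fun s => f (insert a s)) + (1 - p) * subsetExp F p f := by
  unfold subsetExp
  rw [Finset.sum_powerset_insert ha, add_comm, Finset.mul_sum, Finset.mul_sum]
  congr 1 <;> refine Finset.sum_congr rfl fun s hs => ?_
  · have has : a ∉ s := fun h => ha (Finset.mem_powerset.1 hs h)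
    rw [Finset.card_insert_of_notMem ha, Finset.card_insert_of_notMem has,
      Nat.add_sub_add_right]
    ring
  · rw [Finset.card_insert_of_notMem ha,
      Nat.succ_sub (Finset.card_le_card (Finset.mem_powerset.1 hs)), pow_succ]
    ring

lemma subsetProb_insert {F : Finset α} {a : α} (ha : a ∉ F) (p : ℝ) (A : Finset α → Prop) :
    subsetProb (insert a F) p A =
      p * subsetProb F p (fun s => A (insert a s)) + (1 - p) * subsetProb F p A :=
  subsetExp_insert ha p _

lemma subsetExp_union {E F : Finset α} (h : Disjoint E F) (p : ℝ) (f : Finset α → ℝ) :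
    subsetExp (E ∪ F) p f = subsetExp E p (fun s => subsetExp F p (fun t => f (s ∪ t))) := by
  induction E using Finset.induction_on generalizing f with
  | empty => simp [subsetExp_empty]
  | insert a E ha ih =>
    rw [Finset.disjoint_insert_left] at h
    have haEF : a ∉ E ∪ F := by simp [ha, h.1]
    rw [Finset.insert_union, subsetExp_insert haEF, subsetExp_insert ha, ih h.2, ih h.2]
    simp only [Finset.insert_union]

lemma subsetExp_sprinkle (F : Finset α) (p₁ p₂ : ℝ) (f : Finset α → ℝ) :
    subsetExp F (1 - (1 - p₁) * (1 - p₂)) f =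
      subsetExp F p₁ (fun s => subsetExp F p₂ (fun t => f (s ∪ t))) := by
  induction F using Finset.induction_on generalizing f with
  | empty => simp [subsetExp_empty]
  | insert a F ha ih =>
    simp only [subsetExp_insert ha, ih, subsetExp_add, subsetExp_const_mul,
      Finset.insert_union, Finset.union_insert, Finset.insert_idem]
    ring

lemma subsetProb_sprinkle_le {F : Finset α} {p₁ p₂ ε : ℝ} (hp₁ : 0 ≤ p₁) (hp₁' : p₁ ≤ 1)
    (hp₂ : 0 ≤ p₂) (hp₂' : p₂ ≤ 1) (hε : 0 ≤ ε) {A B : Finset α → Prop}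
    (h : ∀ s ⊆ F, ¬B s → subsetProb F p₂ (fun t => A (s ∪ t)) ≤ ε) :
    subsetProb F (1 - (1 - p₁) * (1 - p₂)) A ≤ subsetProb F p₁ B + ε := by
  rw [subsetProb, subsetExp_sprinkle, subsetProb, ← subsetExp_const F p₁ ε, ← subsetExp_add]
  refine subsetExp_mono hp₁ hp₁' fun s hs => ?_
  change subsetProb F p₂ (fun t => A (s ∪ t)) ≤ _
  split_ifs with hB
  · linarith [subsetProb_le_one F hp₂ hp₂' fun t => A (s ∪ t)]
  · simpa using h s hs hB

lemma subsetProb_union_of_iff_and {E F : Finset α} (hEF : Disjoint E F) (p : ℝ)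
    {A B C : Finset α → Prop} (h : ∀ s ⊆ E, ∀ t ⊆ F, C (s ∪ t) ↔ A s ∧ B t) :
    subsetProb (E ∪ F) p C = subsetProb E p A * subsetProb F p B := by
  rw [mul_comm, subsetProb, subsetExp_union hEF]
  conv_rhs => rw [subsetProb, subsetProb, ← subsetExp_const_mul]
  refine subsetExp_congr fun s hs => ?_
  rw [mul_comm, ← subsetExp_const_mul]
  refine subsetExp_congr fun t ht => ?_
  by_cases hA : A s <;> simp [h s hs t ht, hA]

end DecidableEq

lemma subsetProb_forall_not_subset {P : Finset (Finset α)} {F : Finset α} (p : ℝ)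
    (hPF : ∀ E ∈ P, E ⊆ F) (hP : (P : Set (Finset α)).PairwiseDisjoint id) :
    subsetProb F p (fun s => ∀ E ∈ P, ¬E ⊆ s) = ∏ E ∈ P, (1 - p ^ E.card) := by
  induction P using Finset.induction_on generalizing F with
  | empty => simp [subsetProb_eq_one]
  | insert E P hE ih =>
    simp only [Finset.forall_mem_insert] at hPF
    rw [Finset.coe_insert] at hP
    have hdisj : ∀ E' ∈ P, Disjoint E' E := fun E' hE' =>
      hP (by simp [hE']) (by simp) (ne_of_mem_of_not_mem hE' hE)
    rw [Finset.prod_insert hE, ← subsetProb_superset_self, ← subsetProb_not,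
      ← ih (F := F \ E) (fun E' hE' => Finset.subset_sdiff.2 ⟨hPF.2 E' hE', hdisj E' hE'⟩)
        (hP.subset (Set.subset_insert _ _))]
    conv_lhs => rw [← Finset.union_sdiff_of_subset hPF.1]
    refine subsetProb_union_of_iff_and Finset.disjoint_sdiff p fun s hs t ht => ?_
    rw [Finset.forall_mem_insert]
    refine and_congr (not_congr ⟨fun h => ?_, fun h => h.trans Finset.subset_union_left⟩)
      (forall₂_congr fun E' hE' => not_congr
        ⟨fun h => ?_, fun h => h.trans Finset.subset_union_right⟩)
    · exact (Finset.disjoint_sdiff.mono_right ht).left_le_of_le_sup_right h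
    · exact ((hdisj E' hE').mono_right hs).left_le_of_le_sup_left h

end RandomSubsets

section Concentration

open ProbabilityTheory in
lemma two_point_exp_neg_le {p : ℝ} (hp₀ : 0 ≤ p) (hp₁ : p ≤ 1) (a b : ℝ) :
    p * Real.exp (-a) + (1 - p) * Real.exp (-b) ≤
      Real.exp (-(p * a + (1 - p) * b) + (a - b) ^ 2 / 8) := by
  let μ := bernoulliMeasure a b ⟨p, hp₀, hp₁⟩
  have integral_eq (g : ℝ → ℝ) : ∫ x, g x ∂μ = p * g a + (1 - p) * g b := by
    simp [μ, integral_bernoulliMeasure]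
  have hmem : ∀ᵐ x ∂μ, x ∈ Set.Icc (min a b) (max a b) := by
    rw [MeasureTheory.ae_iff, bernoulliMeasure_apply_of_notMem_of_notMem]
    · exact measurableSet_Icc.compl
    all_goals simp
  have hmgf := (hasSubgaussianMGF_of_mem_Icc aemeasurable_id' hmem).mgf_le (-1)
  rw [mgf, integral_eq, integral_eq, max_sub_min_eq_abs'] at hmgf
  set m := p * a + (1 - p) * b
  have exp_neg_eq (x : ℝ) : Real.exp (-x) = Real.exp (-m) * Real.exp (-1 * (x - m)) := by
    rw [← Real.exp_add]
    ring_nf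
  rw [exp_neg_eq a, exp_neg_eq b, Real.exp_add, mul_left_comm p, mul_left_comm (1 - p), ← mul_add]
  refine mul_le_mul_of_nonneg_left (hmgf.trans_eq ?_) (Real.exp_pos _).le
  congr 1
  simp only [NNReal.coe_pow, NNReal.coe_div, coe_nnnorm, Real.norm_eq_abs, abs_abs,
    NNReal.coe_ofNat, div_pow, sq_abs]
  ring

variable {α : Type*} [DecidableEq α]

lemma abs_subsetExp_insert_sub_le {F : Finset α} {p D : ℝ} (hp₀ : 0 ≤ p) (hp₁ : p ≤ 1)
    {f : Finset α → ℝ} {a : α} (hf : ∀ s ⊆ F, |f (insert a s) - f s| ≤ D) :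
    |subsetExp F p (fun s => f (insert a s)) - subsetExp F p f| ≤ D := by
  rw [abs_sub_le_iff, sub_le_iff_le_add, sub_le_iff_le_add, ← subsetExp_const F p D,
    ← subsetExp_add, ← subsetExp_add]
  constructor <;> refine subsetExp_mono hp₀ hp₁ fun s hs => ?_ <;>
    linarith [abs_sub_le_iff.1 (hf s hs)]

lemma subsetExp_exp_neg_le {F : Finset α} {p D : ℝ} (hp₀ : 0 ≤ p) (hp₁ : p ≤ 1)
    {f : Finset α → ℝ} (hf : ∀ a ∈ F, ∀ s ⊆ F, |f (insert a s) - f s| ≤ D) :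
    subsetExp F p (fun s => Real.exp (-f s)) ≤
      Real.exp (-subsetExp F p f + F.card * D ^ 2 / 8) := by
  induction F using Finset.induction_on generalizing f with
  | empty => simp [subsetExp_empty]
  | insert a F ha ih =>
    have hF := Finset.subset_insert a F
    have hwith := ih (f := fun s => f (insert a s)) fun c hc s hs => by
      rw [Finset.insert_comm]
      exact hf c (hF hc) _ (Finset.insert_subset_insert a hs)
    have hwithout := ih (f := f) fun c hc s hs => hf c (hF hc) s (hs.trans hF)
    have hdiff := abs_subsetExp_insert_sub_le hp₀ hp₁ fun s hs =>
      hf a (Finset.mem_insert_self a F) s (hs.trans hF)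
    rw [subsetExp_insert ha, subsetExp_insert ha, Finset.card_insert_of_notMem ha]
    set u := subsetExp F p fun s => f (insert a s)
    set v := subsetExp F p f
    have := sub_nonneg.2 hp₁
    calc
      _ ≤ p * Real.exp (-u + F.card * D ^ 2 / 8) +
          (1 - p) * Real.exp (-v + F.card * D ^ 2 / 8) := by gcongr
      _ = (p * Real.exp (-u) + (1 - p) * Real.exp (-v)) * Real.exp (F.card * D ^ 2 / 8) := by
        rw [Real.exp_add, Real.exp_add]
        ring
      _ ≤ Real.exp (-(p * u + (1 - p) * v) + D ^ 2 / 8) * Real.exp (F.card * D ^ 2 / 8) := by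
        refine mul_le_mul_of_nonneg_right ((two_point_exp_neg_le hp₀ hp₁ u v).trans ?_)
          (Real.exp_pos _).le
        rw [← sq_abs (u - v)]
        gcongr
      _ = _ := by
        rw [← Real.exp_add]
        push_cast
        ring_nf

/-- McDiarmid's inequality, lower tail. -/
lemma subsetProb_lt_le_exp {F : Finset α} {p D σ x y : ℝ} (hp₀ : 0 ≤ p) (hp₁ : p ≤ 1)
    {f : Finset α → ℝ} (hf : ∀ a ∈ F, ∀ s ⊆ F, |f (insert a s) - f s| ≤ D)
    (hσ₀ : 0 < σ) (hσ : F.card * D ^ 2 ≤ σ) (hx : 0 ≤ x) (hy : y + x ≤ subsetExp F p f) :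
    subsetProb F p (fun s => f s < y) ≤ Real.exp (-(2 * x ^ 2 / σ)) := by
  set l := 4 * x / σ
  have hl : 0 ≤ l := by positivity
  have hmarkov : subsetProb F p (fun s => f s < y) ≤
      Real.exp (l * y) * subsetExp F p (fun s => Real.exp (-(l * f s))) := by
    rw [← subsetExp_const_mul]
    refine subsetExp_mono hp₀ hp₁ fun s _ => ?_
    rw [← Real.exp_add]
    split_ifs with h
    · exact Real.one_le_exp (by nlinarith)
    · positivity
  have hmgf := subsetExp_exp_neg_le (f := fun s => l * f s) (D := l * D) hp₀ hp₁ fun a ha s hs => by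
    rw [← mul_sub, abs_mul, abs_of_nonneg hl]
    exact mul_le_mul_of_nonneg_left (hf a ha s hs) hl
  rw [subsetExp_const_mul] at hmgf
  refine hmarkov.trans ((mul_le_mul_of_nonneg_left hmgf (Real.exp_pos _).le).trans ?_)
  rw [← Real.exp_add, Real.exp_le_exp]
  calc
    _ = l * y - l * subsetExp F p f + l ^ 2 * (F.card * D ^ 2) / 8 := by ring
    _ ≤ l * y - l * (y + x) + l ^ 2 * σ / 8 := by gcongr
    _ = -(2 * x ^ 2 / σ) := by
      simp only [l]
      field_simp
      ring

end Concentration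

section GreedyAndSplitting

variable {α ι : Type*}

lemma exists_pairwiseDisjoint_of_avoiding (f : ι → Finset α) (q : ι → Prop) (L N : ℕ)
    (h : ∀ X : Finset α, X.card + L ≤ N * L →
      ∃ i, q i ∧ (f i).Nonempty ∧ (f i).card ≤ L ∧ Disjoint (f i) X) :
    ∃ P : Finset ι, P.card = N ∧ (∀ i ∈ P, q i ∧ (f i).card ≤ L) ∧
      (P : Set ι).PairwiseDisjoint f := by
  induction N with
  | zero => exact ⟨∅, by simp⟩
  | succ N ih =>
    obtain ⟨P, hPN, hP, hdisj⟩ := ih fun X hX => h X (by linarith)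
    have hcard : (P.biUnion f).card ≤ N * L :=
      hPN ▸ Finset.card_biUnion_le_card_mul _ _ _ fun i hi => (hP i hi).2
    obtain ⟨i, hqi, hne, hi, hiP⟩ := h (P.biUnion f) (by linarith)
    rw [Finset.disjoint_biUnion_right] at hiP
    have hi_notMem : i ∉ P := fun hmem => hne.ne_empty (disjoint_self.1 (hiP i hmem))
    refine ⟨insert i P, by rw [Finset.card_insert_of_notMem hi_notMem, hPN],
      Finset.forall_mem_insert _ _ _ |>.2 ⟨⟨hqi, hi⟩, hP⟩, ?_⟩
    rw [Finset.coe_insert]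
    exact hdisj.insert fun j hj _ => hiP j hj

lemma exists_balanced_split [DecidableEq ι] (f : α → ι) {U : Finset α} {a : ℝ} (ha : 0 ≤ a)
    (hU : 3 * a ≤ U.card) (hfib : ∀ i, ((U.filter (f · = i)).card : ℝ) ≤ a) :
    ∃ D : Finset ι, a ≤ (U.filter (f · ∈ D)).card ∧ a ≤ (U.filter (f · ∉ D)).card := by
  let Large := (U.image f).powerset.filter fun D => a ≤ ((U.filter (f · ∈ D)).card : ℝ)
  have hLarge : Large.Nonempty := ⟨U.image f, by
    rw [Finset.mem_filter, Finset.filter_true_of_mem fun u hu => Finset.mem_image_of_mem f hu]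
    exact ⟨Finset.mem_powerset_self _, by linarith⟩⟩
  obtain ⟨D, hD, hmin⟩ := Large.exists_min_image Finset.card hLarge
  simp only [Large, Finset.mem_filter, Finset.mem_powerset] at hD hmin
  refine ⟨D, hD.2, ?_⟩
  have hsplit : ((U.filter (f · ∈ D)).card : ℝ) + (U.filter (f · ∉ D)).card = U.card := by
    exact_mod_cast U.card_filter_add_card_filter_not (f · ∈ D)
  suffices ((U.filter (f · ∈ D)).card : ℝ) ≤ 2 * a by linarith
  rcases D.eq_empty_or_nonempty with rfl | ⟨i, hi⟩
  · simpa
  have herase : ((U.filter (f · ∈ D.erase i)).card : ℝ) < a := by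
    by_contra! hle
    exact (Finset.card_erase_lt_of_mem hi).not_ge
      (hmin _ ⟨(Finset.erase_subset i D).trans hD.1, hle⟩)
  have hle : ((U.filter (f · ∈ D)).card : ℝ) ≤
      (U.filter (f · ∈ D.erase i)).card + (U.filter (f · = i)).card := by
    have hsub : U.filter (f · ∈ D) ⊆ U.filter (f · ∈ D.erase i) ∪ U.filter (f · = i) := by
      intro u
      simp only [Finset.mem_filter, Finset.mem_union, Finset.mem_erase]
      tauto
    exact_mod_cast (Finset.card_le_card hsub).trans (Finset.card_union_le _ _)
  linarith [hfib i]

end GreedyAndSplitting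

section Graphs

variable {α : Type*}

/-- The graph whose edges are the non-loops of `s`: the spanning subgraph left by a percolation
whose set of open edges is `s`. -/
abbrev openGraph (s : Finset (Sym2 α)) : SimpleGraph α :=
  SimpleGraph.fromEdgeSet (s : Set (Sym2 α))

/-- The edges of `F` joining `S` to its complement. -/
def cutEdges (F : Finset (Sym2 α)) (S : Finset α) : Finset (Sym2 α) :=
  F.filter fun e => ∃ x ∈ S, ∃ y ∉ S, e = s(x, y)

/-- Some path with all its edges in `E` leads from `A` to `B`. -/
def Connects (E : Finset (Sym2 α)) (A B : Finset α) : Prop :=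
  ∃ a ∈ A, ∃ b ∈ B, (openGraph E).Reachable a b

lemma mem_cutEdges {F : Finset (Sym2 α)} {S : Finset α} {e : Sym2 α} :
    e ∈ cutEdges F S ↔ e ∈ F ∧ ∃ x ∈ S, ∃ y ∉ S, e = s(x, y) := by
  simp [cutEdges]

lemma openGraph_mono {E F : Finset (Sym2 α)} (h : E ⊆ F) : openGraph E ≤ openGraph F :=
  SimpleGraph.fromEdgeSet_mono (Finset.coe_subset.2 h)

lemma openGraph_reachable_of_mem {s : Finset (Sym2 α)} {x y : α} (h : s(x, y) ∈ s) :
    (openGraph s).Reachable x y := by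
  by_cases hxy : x = y
  · rw [hxy]
  · exact SimpleGraph.Adj.reachable ((SimpleGraph.fromEdgeSet_adj _).2 ⟨h, hxy⟩)

lemma Connects.mono {E F : Finset (Sym2 α)} {A B : Finset α} (hE : Connects E A B) (h : E ⊆ F) :
    Connects F A B :=
  let ⟨a, ha, b, hb, hab⟩ := hE
  ⟨a, ha, b, hb, hab.mono (openGraph_mono h)⟩

lemma Connects.nonempty {E : Finset (Sym2 α)} {A B : Finset α} (hE : Connects E A B)
    (hAB : Disjoint A B) : E.Nonempty := by
  obtain ⟨a, ha, b, hb, hab⟩ := hE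
  rw [Finset.nonempty_iff_ne_empty]
  rintro rfl
  rw [openGraph, Finset.coe_empty, SimpleGraph.fromEdgeSet_empty, SimpleGraph.reachable_bot] at hab
  exact Finset.disjoint_left.1 hAB ha (hab ▸ hb)

variable [Fintype α]

/-- The connected component of `v` when exactly the edges in `s` are open. -/
def cluster (s : Finset (Sym2 α)) (v : α) : Finset α :=
  Finset.univ.filter ((openGraph s).Reachable v)

/-- The vertices at distance at most one from `A` in `G`. -/
def closedNbhd (G : SimpleGraph α) (A : Finset α) : Finset α :=
  Finset.univ.filter fun y => y ∈ A ∨ ∃ x ∈ A, G.Adj x y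

@[simp]
lemma mem_cluster {s : Finset (Sym2 α)} {v w : α} :
    w ∈ cluster s v ↔ (openGraph s).Reachable v w := by
  simp [cluster]

@[simp]
lemma mem_closedNbhd {G : SimpleGraph α} {A : Finset α} {y : α} :
    y ∈ closedNbhd G A ↔ y ∈ A ∨ ∃ x ∈ A, G.Adj x y := by
  simp [closedNbhd]

lemma subset_closedNbhd (G : SimpleGraph α) (A : Finset α) : A ⊆ closedNbhd G A :=
  fun _ hx => mem_closedNbhd.2 (Or.inl hx)

lemma subset_closedNbhd_iterate (G : SimpleGraph α) (i : ℕ) (A : Finset α) :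
    A ⊆ (closedNbhd G)^[i] A :=
  Function.id_le_iterate_of_id_le (subset_closedNbhd G) i A

lemma card_closedNbhd_le {G : SimpleGraph α} {Δ : ℕ} (hΔ : ∀ v, (G.neighborSet v).ncard ≤ Δ)
    (A : Finset α) : (closedNbhd G A).card ≤ (Δ + 1) * A.card := by
  have hsub : closedNbhd G A ⊆ A ∪ A.biUnion fun v => G.neighborFinset v := fun y hy => by
    simpa [mem_closedNbhd] using hy
  have hdeg : ∀ v ∈ A, (G.neighborFinset v).card ≤ Δ := fun v _ =>
    (Set.ncard_eq_toFinset_card' _).symm.trans_le (hΔ v)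
  calc
    _ ≤ A.card + (A.biUnion fun v => G.neighborFinset v).card :=
      (Finset.card_le_card hsub).trans (Finset.card_union_le _ _)
    _ ≤ A.card + A.card * Δ := by
      gcongr
      exact Finset.card_biUnion_le_card_mul _ _ _ hdeg
    _ = (Δ + 1) * A.card := by ring

lemma card_closedNbhd_iterate_le {G : SimpleGraph α} {Δ : ℕ}
    (hΔ : ∀ v, (G.neighborSet v).ncard ≤ Δ) (i : ℕ) (A : Finset α) :
    ((closedNbhd G)^[i] A).card ≤ (Δ + 1) ^ i * A.card := by
  induction i with
  | zero => simp
  | succ i ih =>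
    rw [Function.iterate_succ_apply', pow_succ', mul_assoc]
    exact (card_closedNbhd_le hΔ _).trans (Nat.mul_le_mul_left _ ih)

end Graphs

section Connectors

variable {α : Type*}

section Layers

variable [Fintype α]

lemma exists_short_path_of_mem_closedNbhd_iterate {F : Finset (Sym2 α)} {A : Finset α} {i : ℕ}
    {y : α} (hy : y ∈ (closedNbhd (openGraph F))^[i] A) :
    ∃ E ⊆ F, E.card ≤ i ∧ ∃ a ∈ A, (openGraph E).Reachable a y := by
  induction i generalizing y with
  | zero => exact ⟨∅, by simp, by simp, y, hy, .refl y⟩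
  | succ i ih =>
    rw [Function.iterate_succ_apply', mem_closedNbhd] at hy
    rcases hy with hy | ⟨x, hx, hxy⟩
    · obtain ⟨E, hE, hcard, h⟩ := ih hy
      exact ⟨E, hE, hcard.trans i.le_succ, h⟩
    · obtain ⟨E, hE, hcard, a, ha, hax⟩ := ih hx
      rw [SimpleGraph.fromEdgeSet_adj] at hxy
      exact ⟨insert s(x, y) E, Finset.insert_subset hxy.1 hE,
        (Finset.card_insert_le _ _).trans (Nat.succ_le_succ hcard), a, ha,
        (hax.mono (openGraph_mono (Finset.subset_insert _ _))).trans
          (openGraph_reachable_of_mem (Finset.mem_insert_self _ _))⟩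

lemma card_filter_subset_add_card_cutEdges_le (F : Finset (Sym2 α)) (S : Finset α) :
    (F.filter fun e => ∀ x ∈ e, x ∈ S).card + (cutEdges F S).card ≤
      (F.filter fun e => ∀ x ∈ e, x ∈ closedNbhd (openGraph F) S).card := by
  rw [← Finset.card_union_of_disjoint]
  · refine Finset.card_le_card fun e he => ?_
    simp only [Finset.mem_union, mem_cutEdges, Finset.mem_filter] at he ⊢
    rcases he with ⟨heF, he⟩ | ⟨heF, x, hx, y, hy, rfl⟩
    · exact ⟨heF, fun x hx => subset_closedNbhd _ _ (he x hx)⟩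
    · have hxy : (openGraph F).Adj x y :=
        (SimpleGraph.fromEdgeSet_adj _).2 ⟨heF, ne_of_mem_of_not_mem hx hy⟩
      refine ⟨heF, Sym2.ball.2 ⟨subset_closedNbhd _ _ hx, mem_closedNbhd.2 (.inr ⟨x, hx, hxy⟩)⟩⟩
  · refine Finset.disjoint_left.2 fun e he hcut => ?_
    obtain ⟨-, x, -, y, hy, rfl⟩ := mem_cutEdges.1 hcut
    exact hy ((Finset.mem_filter.1 he).2 y (Sym2.mem_mk_right x y))

end Layers

/-- The breadth-first layers around `A` each absorb `γ` new edges, so one of the first `L`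
meets `B`. -/
lemma exists_connector [Finite α] {F : Finset (Sym2 α)} {A B : Finset α} {γ : ℝ} {L : ℕ}
    (hcut : ∀ S, A ⊆ S → Disjoint S B → γ ≤ (cutEdges F S).card) (hF : F.card < L * γ) :
    ∃ E ⊆ F, E.card ≤ L ∧ Connects E A B := by
  have := Fintype.ofFinite α
  by_contra! hnone
  let layer (i : ℕ) := (closedNbhd (openGraph F))^[i] A
  have hdisj : ∀ i ≤ L, Disjoint (layer i) B := by
    intro i hi
    refine Finset.disjoint_left.2 fun y hy hyB => ?_
    obtain ⟨E, hE, hcard, a, ha, hay⟩ := exists_short_path_of_mem_closedNbhd_iterate hy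
    exact hnone E hE (hcard.trans hi) ⟨a, ha, y, hyB, hay⟩
  have hgrowth : ∀ i ≤ L, i * γ ≤ (F.filter fun e => ∀ x ∈ e, x ∈ layer i).card := by
    intro i hi
    induction i with
    | zero => simp
    | succ i ih =>
      have hstep := card_filter_subset_add_card_cutEdges_le F (layer i)
      rw [← Function.iterate_succ_apply' (closedNbhd (openGraph F)) i A] at hstep
      have hlayer := hcut _ (subset_closedNbhd_iterate _ i A) (hdisj i (by lia))
      calc
        _ = i * γ + γ := by push_cast; ring
        _ ≤ _ := add_le_add (ih (by lia)) hlayer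
        _ ≤ _ := by exact_mod_cast hstep
  have hle : ((F.filter fun e => ∀ x ∈ e, x ∈ layer L).card : ℝ) ≤ F.card := by
    exact_mod_cast Finset.card_filter_le _ _
  linarith [hgrowth L le_rfl]

lemma card_cutEdges_le_add_card {F F' X : Finset (Sym2 α)} (h : (F : Set (Sym2 α)) ⊆ F' ∪ X)
    (S : Finset α) : (cutEdges F S).card ≤ (cutEdges F' S).card + X.card := by
  refine (Finset.card_le_card fun e he => ?_).trans (Finset.card_union_le _ _)
  rw [mem_cutEdges] at he
  rcases h he.1 with heF' | heX
  · exact Finset.mem_union_left _ (mem_cutEdges.2 ⟨heF', he.2⟩)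
  · exact Finset.mem_union_right _ heX

lemma exists_disjoint_connectors [Finite α] {F : Finset (Sym2 α)} {A B : Finset α} {β : ℝ}
    {L : ℕ} (hAB : Disjoint A B)
    (hcut : ∀ S, A ⊆ S → Disjoint S B → β ≤ (cutEdges F S).card) (hF : F.card < L * (β / 2)) :
    ∃ P : Finset (Finset (Sym2 α)), (∀ E ∈ P, E ⊆ F ∧ E.card ≤ L ∧ Connects E A B) ∧
      (P : Set (Finset (Sym2 α))).PairwiseDisjoint id ∧ β / (2 * L) ≤ P.card := by
  have hLβ : 0 < L * (β / 2) := (Nat.cast_nonneg _).trans_lt hF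
  have hL : (0 : ℝ) < L := by
    rcases (Nat.cast_nonneg L : (0 : ℝ) ≤ L).eq_or_lt with h | h
    · simp [← h] at hLβ
    · exact h
  have hβ : 0 < β := by linarith [pos_of_mul_pos_right hLβ hL.le]
  let N := ⌈β / (2 * L)⌉₊
  obtain ⟨P, hPN, hP, hdisj⟩ := exists_pairwiseDisjoint_of_avoiding id
    (fun E => E ⊆ F ∧ Connects E A B) L N fun X hX => by
      have hX' : (X.card : ℝ) ≤ β / 2 := by
        have hN : (N : ℝ) < β / (2 * L) + 1 := Nat.ceil_lt_add_one (by positivity)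
        have hX : (X.card + L : ℝ) ≤ N * L := by exact_mod_cast hX
        calc
          (X.card : ℝ) ≤ (N - 1) * L := by linarith
          _ ≤ β / (2 * L) * L := by gcongr; linarith
          _ = β / 2 := by field_simp
      have hFX : ((F \ X).card : ℝ) ≤ F.card := by
        exact_mod_cast Finset.card_le_card Finset.sdiff_subset
      obtain ⟨E, hE, hcard, hconn⟩ := exists_connector (F := F \ X) (γ := β / 2) (L := L)
        (fun S hAS hSB => by
          have : ((cutEdges F S).card : ℝ) ≤ (cutEdges (F \ X) S).card + X.card := by
            exact_mod_cast card_cutEdges_le_add_card (F' := F \ X) (X := X) (by simp) S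
          linarith [hcut S hAS hSB]) (by linarith)
      exact ⟨E, ⟨hE.trans Finset.sdiff_subset, hconn⟩, hconn.nonempty hAB, hcard,
        (Finset.subset_sdiff.1 hE).2⟩
  exact ⟨P, fun E hE => ⟨(hP E hE).1.1, (hP E hE).2, (hP E hE).1.2⟩, hdisj,
    hPN ▸ Nat.le_ceil _⟩

lemma subsetProb_not_connects_le [Finite α] {F : Finset (Sym2 α)} {A B : Finset α} {p β : ℝ}
    {L : ℕ} (hp₀ : 0 ≤ p) (hp₁ : p ≤ 1) (hAB : Disjoint A B)
    (hcut : ∀ S, A ⊆ S → Disjoint S B → β ≤ (cutEdges F S).card) (hF : F.card < L * (β / 2)) :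
    subsetProb F p (fun t => ¬Connects t A B) ≤ Real.exp (-(p ^ L * (β / (2 * L)))) := by
  obtain ⟨P, hP, hdisj, hcard⟩ := exists_disjoint_connectors hAB hcut hF
  calc
    _ ≤ subsetProb F p (fun t => ∀ E ∈ P, ¬E ⊆ t) :=
      subsetProb_mono hp₀ hp₁ fun t _ ht E hE hEt => ht ((hP E hE).2.2.mono hEt)
    _ = ∏ E ∈ P, (1 - p ^ E.card) :=
      subsetProb_forall_not_subset p (fun E hE => (hP E hE).1) hdisj
    _ ≤ ∏ _E ∈ P, Real.exp (-p ^ L) := by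
      refine Finset.prod_le_prod (fun E _ => sub_nonneg.2 (pow_le_one₀ hp₀ hp₁)) fun E hE => ?_
      linarith [pow_le_pow_of_le_one hp₀ hp₁ (hP E hE).2.1, Real.one_sub_le_exp_neg (p ^ L)]
    _ = Real.exp (-(p ^ L * P.card)) := by
      rw [Finset.prod_const, ← Real.exp_nat_mul]
      ring_nf
    _ ≤ _ := by gcongr

end Connectors

section Exploration

variable {α : Type*}

lemma eq_of_adj_of_card_lt_egirth {G : SimpleGraph α} {S : Finset α}
    (hS : (G.induce (S : Set α)).Connected) (hgirth : (S.card + 1 : ℕ∞) < G.egirth) {w x y : α}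
    (hw : w ∉ S) (hx : x ∈ S) (hy : y ∈ S) (hxw : G.Adj x w) (hyw : G.Adj y w) : y = x := by
  by_contra hyx
  obtain ⟨q⟩ := hS.preconnected ⟨x, hx⟩ ⟨y, hy⟩
  let path := q.toPath
  let walk : G.Walk x y := path.1.map (SimpleGraph.Embedding.induce _).toHom
  have hwalk : ∀ z ∈ walk.support, z ∈ S := fun z hz => by
    obtain ⟨u, -, rfl⟩ := List.mem_map.1 ((SimpleGraph.Walk.support_map _ _) ▸ hz)
    exact u.2
  have hpath : walk.IsPath :=
    path.2.map Subtype.val_injective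
  have hcycle : (SimpleGraph.Walk.cons hxw.symm (walk.concat hyw)).IsCycle := by
    refine (SimpleGraph.Walk.cons_isCycle_iff _ _).2
      ⟨hpath.concat (fun h => hw (hwalk w h)) hyw, ?_⟩
    rw [SimpleGraph.Walk.edges_concat, List.concat_eq_append, List.mem_append,
      List.mem_singleton, not_or]
    refine ⟨fun h => hw (hwalk w (walk.fst_mem_support_of_mem_edges h)), ?_⟩
    rw [Sym2.eq_swap, Sym2.congr_left]
    exact Ne.symm hyx
  have hlength : path.1.length < S.card := by simpa using path.2.length_lt
  have hshort := hgirth.trans_le hcycle.egirth_le_length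
  have hwalk_length : walk.length = path.1.length := SimpleGraph.Walk.length_map _ _
  rw [SimpleGraph.Walk.length_cons, SimpleGraph.Walk.length_concat, hwalk_length] at hshort
  have : S.card + 1 < path.1.length + 1 + 1 := by exact_mod_cast hshort
  lia

lemma card_cutEdges_add_card_le {F : Finset (Sym2 α)} {S N : Finset α} {x w : α}
    (hx : x ∈ S) (hw : w ∉ S) (hunique : ∀ y ∈ S, s(y, w) ∈ F → y = x)
    (hN : ∀ z ∈ N, z ∉ insert w S ∧ s(w, z) ∈ F) :
    (cutEdges F S).card + N.card ≤ (cutEdges (F.erase s(x, w)) (insert w S)).card + 1 := by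
  have hold : (cutEdges F S).erase s(x, w) ⊆ cutEdges (F.erase s(x, w)) (insert w S) := by
    intro e he
    obtain ⟨hne, he⟩ := Finset.mem_erase.1 he
    obtain ⟨heF, y, hy, z, hz, rfl⟩ := mem_cutEdges.1 he
    have hzw : z ≠ w := by
      rintro rfl
      exact hne (hunique y hy heF ▸ rfl)
    exact mem_cutEdges.2 ⟨Finset.mem_erase.2 ⟨hne, heF⟩, y, Finset.mem_insert_of_mem hy, z,
      by simp [hzw, hz], rfl⟩
  have hnew : N.image (s(w, ·)) ⊆ cutEdges (F.erase s(x, w)) (insert w S) := by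
    refine Finset.image_subset_iff.2 fun z hz => ?_
    obtain ⟨hzS, hzF⟩ := hN z hz
    refine mem_cutEdges.2 ⟨Finset.mem_erase.2 ⟨?_, hzF⟩, w, Finset.mem_insert_self w S, z, hzS, rfl⟩
    rw [Sym2.eq_swap, Ne, Sym2.congr_left]
    rintro rfl
    exact hzS (Finset.mem_insert_of_mem hx)
  have hdisj : Disjoint ((cutEdges F S).erase s(x, w)) (N.image (s(w, ·))) := by
    refine Finset.disjoint_left.2 fun e he he' => ?_
    obtain ⟨z, hz, rfl⟩ := Finset.mem_image.1 he'
    obtain ⟨-, y, hy, _, -, hyz⟩ := mem_cutEdges.1 (Finset.mem_of_mem_erase he)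
    have hyw : y = w ∨ y = z := Sym2.mem_iff.1 (hyz ▸ Sym2.mem_mk_left y _)
    rcases hyw with rfl | rfl
    · exact hw hy
    · exact (hN y hz).1 (Finset.mem_insert_of_mem hy)
  have hcard := Finset.card_le_card (Finset.union_subset hold hnew)
  rw [Finset.card_union_of_disjoint hdisj,
    Finset.card_image_of_injective _ fun a b h => Sym2.congr_right.1 h] at hcard
  have := Finset.pred_card_le_card_erase (s := cutEdges F S) (a := s(x, w))
  lia

variable [Fintype α]

lemma biUnion_cluster_insert_subset (s : Finset (Sym2 α)) {S : Finset α} {x : α} (hx : x ∈ S)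
    (w : α) : (insert w S).biUnion (cluster s) ⊆ S.biUnion (cluster (insert s(x, w) s)) := by
  intro u hu
  simp only [Finset.mem_biUnion, mem_cluster] at hu ⊢
  obtain ⟨y, hy, hyu⟩ := hu
  replace hyu := hyu.mono (openGraph_mono (Finset.subset_insert s(x, w) s))
  rcases Finset.mem_insert.1 hy with rfl | hy
  · exact ⟨x, hx, (openGraph_reachable_of_mem (Finset.mem_insert_self _ _)).trans hyu⟩
  · exact ⟨y, hy, hyu⟩

/-- A stage in the exploration of a cluster of the percolation on `G`, kept away from the
exceptional set `T` until `k` vertices have been found: the vertices in `S` have been reached,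
and the states of the edges in `F` have not been revealed yet. -/
structure IsExplorationState (G : SimpleGraph α) (T : Finset α) (k : ℕ) (F : Finset (Sym2 α))
    (S : Finset α) : Prop where
  subset_edgeSet : (F : Set (Sym2 α)) ⊆ G.edgeSet
  connected : (G.induce (S : Set α)).Connected
  mem_of_notMem : ∀ ⦃x y⦄, G.Adj x y → x ∉ T → x ∉ S → y ∉ S → s(x, y) ∈ F
  disjoint : Disjoint S ((closedNbhd G)^[k - S.card] T)

namespace IsExplorationState

variable {G : SimpleGraph α} {T : Finset α} {k : ℕ} {F : Finset (Sym2 α)} {S : Finset α} {x w : α}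

lemma erase (h : IsExplorationState G T k F S) (hx : x ∈ S) :
    IsExplorationState G T k (F.erase s(x, w)) S where
  subset_edgeSet := (Finset.coe_subset.2 (F.erase_subset _)).trans h.subset_edgeSet
  connected := h.connected
  mem_of_notMem y z hyz hyT hy hz := by
    refine Finset.mem_erase.2 ⟨fun heq => ?_, h.mem_of_notMem hyz hyT hy hz⟩
    rcases Sym2.mem_iff.1 (heq ▸ Sym2.mem_mk_left x w) with rfl | rfl
    exacts [hy hx, hz hx]
  disjoint := h.disjoint

lemma notMem_closedNbhd_iterate (h : IsExplorationState G T k F S) (hk : S.card < k) (hx : x ∈ S)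
    (hxw : G.Adj x w) : w ∉ (closedNbhd G)^[k - S.card - 1] T := fun hw => by
  refine Finset.disjoint_left.1 h.disjoint hx ?_
  rw [← Nat.sub_add_cancel (Nat.sub_pos_of_lt hk), Function.iterate_succ_apply', mem_closedNbhd]
  exact .inr ⟨w, hw, hxw.symm⟩

lemma insert_erase (h : IsExplorationState G T k F S) (hk : S.card < k) (hx : x ∈ S) (hw : w ∉ S)
    (hxw : G.Adj x w) : IsExplorationState G T k (F.erase s(x, w)) (insert w S) where
  subset_edgeSet := (h.erase hx).subset_edgeSet
  connected := by
    rw [Finset.coe_insert, ← Set.union_singleton]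
    exact SimpleGraph.connected_induce_union h.connected.preconnected .of_subsingleton
      (Finset.mem_coe.2 hx) rfl hxw
  mem_of_notMem y z hyz hyT hy hz := (h.erase hx).mem_of_notMem hyz hyT
    (fun hmem => hy (Finset.mem_insert_of_mem hmem)) fun hmem => hz (Finset.mem_insert_of_mem hmem)
  disjoint := by
    rw [Finset.card_insert_of_notMem hw, ← Nat.sub_sub, Finset.disjoint_insert_left]
    exact ⟨h.notMem_closedNbhd_iterate hk hx hxw, h.disjoint.mono_right
      (Function.monotone_iterate_of_id_le (subset_closedNbhd G) (Nat.sub_le _ 1) T)⟩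

/-- Opening an edge `xw` uses up one boundary edge, but in the absence of short cycles every edge
at `w` other than `xw` is new. -/
lemma card_cutEdges_add_le (h : IsExplorationState G T k F S) (hk : S.card < k)
    (hgirth : (k : ℕ∞) < G.egirth) {d : ℕ} (hd : ∀ v, d ≤ (G.neighborSet v).ncard) (hx : x ∈ S)
    (hw : w ∉ S) (hxw : G.Adj x w) :
    (cutEdges F S).card + (d - 1) ≤ (cutEdges (F.erase s(x, w)) (insert w S)).card + 1 := by
  have hunique : ∀ y ∈ S, G.Adj y w → y = x := fun y hy hyw =>
    eq_of_adj_of_card_lt_egirth h.connected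
      (lt_of_le_of_lt (by exact_mod_cast hk) hgirth) hw hx hy hxw hyw
  let N := (G.neighborFinset w).erase x
  have hN : d - 1 ≤ N.card := by
    rw [Finset.card_erase_of_mem (by simpa using hxw.symm)]
    exact Nat.sub_le_sub_right ((hd w).trans_eq (Set.ncard_eq_toFinset_card' _)) 1
  refine (Nat.add_le_add_left hN _).trans (card_cutEdges_add_card_le hx hw
    (fun y hy hyF => hunique y hy (h.subset_edgeSet hyF)) fun z hz => ?_)
  obtain ⟨hzx, hwz⟩ := Finset.mem_erase.1 hz
  rw [SimpleGraph.mem_neighborFinset] at hwz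
  have hzS : z ∉ S := fun hzS => hzx (hunique z hzS hwz.symm)
  refine ⟨by simp [hwz.ne', hzS], h.mem_of_notMem hwz (fun hwT => ?_) hw hzS⟩
  exact h.notMem_closedNbhd_iterate hk hx hxw (subset_closedNbhd_iterate _ _ _ hwT)

/-- The probability that the exploration dies out before reaching `k` vertices is at most
`r ^ u`, where `u` is the current number of unrevealed boundary edges. -/
lemma one_sub_pow_le_subsetProb (h : IsExplorationState G T k F S)
    (hgirth : (k : ℕ∞) < G.egirth) {d : ℕ} (hd : ∀ v, d ≤ (G.neighborSet v).ncard) {p r : ℝ}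
    (hp₀ : 0 ≤ p) (hp₁ : p ≤ 1) (hr₀ : 0 ≤ r) (hr₁ : r ≤ 1)
    (hr : p * r ^ (d - 1) + (1 - p) ≤ r) :
    1 - r ^ (cutEdges F S).card ≤
      subsetProb F p fun s => k ≤ (S.biUnion (cluster s)).card := by
  induction F using Finset.strongInduction generalizing S with
  | H F ih =>
  rcases le_or_gt k S.card with hk | hk
  · have hsub (s : Finset (Sym2 α)) : S ⊆ S.biUnion (cluster s) := fun v hv =>
      Finset.mem_biUnion.2 ⟨v, hv, mem_cluster.2 (.refl v)⟩
    rw [subsetProb_eq_one p fun s _ => hk.trans (Finset.card_le_card (hsub s))]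
    exact sub_le_self 1 (pow_nonneg hr₀ _)
  rcases (cutEdges F S).eq_empty_or_nonempty with hcut | ⟨e, he⟩
  · rw [hcut, Finset.card_empty, pow_zero, sub_self]
    exact subsetProb_nonneg F hp₀ hp₁ _
  obtain ⟨heF, x, hx, w, hw, rfl⟩ := mem_cutEdges.1 he
  obtain ⟨u, hu⟩ : ∃ u, (cutEdges F S).card = u + 1 :=
    Nat.exists_eq_succ_of_ne_zero (Finset.card_ne_zero_of_mem he)
  have hxw := h.subset_edgeSet heF
  have hlt := Finset.erase_ssubset heF
  set F' := F.erase s(x, w) with hF'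
  have hclosed : 1 - r ^ u ≤ subsetProb F' p fun s => k ≤ (S.biUnion (cluster s)).card := by
    have hcut : (cutEdges F' S).card = u := by
      rw [cutEdges, hF', Finset.filter_erase, ← cutEdges, Finset.card_erase_of_mem he, hu,
        Nat.add_sub_cancel]
    exact hcut ▸ ih F' hlt (h.erase hx)
  have hopen : 1 - r ^ (u + (d - 1)) ≤
      subsetProb F' p fun s => k ≤ (S.biUnion (cluster (insert s(x, w) s))).card := by
    have hcut : u + (d - 1) ≤ (cutEdges F' (insert w S)).card := by
      have := h.card_cutEdges_add_le hk hgirth hd hx hw hxw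
      lia
    refine (sub_le_sub_left (pow_le_pow_of_le_one hr₀ hr₁ hcut) 1).trans
      ((ih F' hlt (h.insert_erase hk hx hw hxw)).trans ?_)
    exact subsetProb_mono hp₀ hp₁ fun s _ hs =>
      hs.trans (Finset.card_le_card (biUnion_cluster_insert_subset s hx w))
  rw [hu, ← Finset.insert_erase heF, subsetProb_insert (Finset.notMem_erase _ _)]
  calc
    1 - r ^ (u + 1) ≤ 1 - r ^ u * (p * r ^ (d - 1) + (1 - p)) := by rw [pow_succ]; gcongr
    _ = p * (1 - r ^ (u + (d - 1))) + (1 - p) * (1 - r ^ u) := by rw [pow_add]; ring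
    _ ≤ _ := add_le_add (mul_le_mul_of_nonneg_left hopen hp₀)
      (mul_le_mul_of_nonneg_left hclosed (sub_nonneg.2 hp₁))

end IsExplorationState

lemma one_sub_le_subsetProb_le_card_cluster {G : SimpleGraph α} {T : Finset α} {k d : ℕ}
    (hgirth : (k : ℕ∞) < G.egirth) (hd₀ : 1 ≤ d) (hd : ∀ v, d ≤ (G.neighborSet v).ncard)
    {F : Finset (Sym2 α)} (hF : (F : Set (Sym2 α)) ⊆ G.edgeSet)
    (hFT : ∀ ⦃x y⦄, G.Adj x y → x ∉ T → s(x, y) ∈ F) {v : α} (hv : v ∉ (closedNbhd G)^[k] T)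
    {p r : ℝ} (hp₀ : 0 ≤ p) (hp₁ : p ≤ 1) (hr₀ : 0 ≤ r) (hr₁ : r ≤ 1)
    (hr : p * r ^ (d - 1) + (1 - p) ≤ r) :
    1 - r ≤ subsetProb F p fun s => k ≤ (cluster s v).card := by
  have hstate : IsExplorationState G T k F {v} :=
    { subset_edgeSet := hF
      connected := by
        rw [Finset.coe_singleton]
        exact { preconnected := .of_subsingleton }
      mem_of_notMem := fun x y hxy hx _ _ => hFT hxy hx
      disjoint := Finset.disjoint_singleton_left.2 fun hmem =>
        hv (Function.monotone_iterate_of_id_le (subset_closedNbhd G) (Nat.sub_le k _) T hmem) }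
  obtain ⟨w, hw⟩ : (G.neighborSet v).Nonempty := Set.nonempty_of_ncard_ne_zero (by grind)
  have hcut : s(v, w) ∈ cutEdges F {v} := mem_cutEdges.2
    ⟨hFT hw fun hvT => hv (subset_closedNbhd_iterate _ _ _ hvT), v, by simp, w,
      by simpa using hw.ne', rfl⟩
  have hsurvive := hstate.one_sub_pow_le_subsetProb hgirth hd hp₀ hp₁ hr₀ hr₁ hr
  simp only [Finset.singleton_biUnion] at hsurvive
  exact (sub_le_sub_left (pow_le_of_le_one hr₀ hr₁ (Finset.card_ne_zero_of_mem hcut)) 1).trans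
    hsurvive

end Exploration

section FirstRound

variable {α : Type*}

lemma card_biUnion_toFinset_le (M : Finset (Sym2 α)) :
    (M.biUnion Sym2.toFinset).card ≤ M.card * 2 :=
  Finset.card_biUnion_le_card_mul _ _ 2 fun e _ => by
    rw [Sym2.card_toFinset]
    split_ifs <;> simp

variable [Fintype α]

/-- The vertices lying in clusters of at least `k` vertices when exactly the edges in `s` are
open. -/
def bigVerts (s : Finset (Sym2 α)) (k : ℕ) : Finset α :=
  Finset.univ.filter fun v => k ≤ (cluster s v).card

@[simp]
lemma mem_bigVerts {s : Finset (Sym2 α)} {k : ℕ} {v : α} :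
    v ∈ bigVerts s k ↔ k ≤ (cluster s v).card := by
  simp [bigVerts]

lemma cluster_mono {s t : Finset (Sym2 α)} (h : s ⊆ t) (v : α) : cluster s v ⊆ cluster t v :=
  fun _ hu => mem_cluster.2 ((mem_cluster.1 hu).mono (openGraph_mono h))

lemma cluster_eq_of_mem {s : Finset (Sym2 α)} {v w : α} (h : w ∈ cluster s v) :
    cluster s w = cluster s v := by
  rw [mem_cluster] at h
  ext u
  simp only [mem_cluster]
  exact ⟨h.trans, h.symm.trans⟩

lemma cluster_insert_subset {s : Finset (Sym2 α)} {x y v : α} (hx : x ∉ cluster s v)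
    (hy : y ∉ cluster s v) : cluster (insert s(x, y) s) v ⊆ cluster s v := by
  intro u hu
  rw [mem_cluster, SimpleGraph.reachable_iff_reflTransGen] at hu
  induction hu with
  | refl => simp
  | @tail a c _ hac ha =>
    rw [SimpleGraph.fromEdgeSet_adj, Finset.mem_coe, Finset.mem_insert] at hac
    rcases hac.1 with hac | hac
    · rcases Sym2.eq_iff.1 hac with ⟨rfl, -⟩ | ⟨rfl, -⟩
      exacts [absurd ha hx, absurd ha hy]
    · exact mem_cluster.2 ((mem_cluster.1 ha).trans (openGraph_reachable_of_mem hac))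

lemma bigVerts_insert_sdiff_subset (s : Finset (Sym2 α)) (k : ℕ) (x y : α) :
    bigVerts (insert s(x, y) s) k \ bigVerts s k ⊆
      (({x, y} : Finset α).filter fun z => (cluster s z).card < k).biUnion (cluster s) := by
  intro v hv
  simp only [Finset.mem_sdiff, mem_bigVerts, not_le] at hv
  obtain ⟨z, hz, hzv⟩ : ∃ z ∈ ({x, y} : Finset α), z ∈ cluster s v := by
    by_contra! h
    simp only [Finset.forall_mem_insert, Finset.mem_singleton, forall_eq] at h
    exact (hv.1.trans (Finset.card_le_card (cluster_insert_subset h.1 h.2))).not_gt hv.2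
  have hcl := cluster_eq_of_mem hzv
  exact Finset.mem_biUnion.2 ⟨z, Finset.mem_filter.2 ⟨hz, hcl ▸ hv.2⟩, hcl ▸ by simp⟩

lemma abs_card_bigVerts_insert_sub_le (s : Finset (Sym2 α)) (k : ℕ) (e : Sym2 α) :
    |((bigVerts (insert e s) k).card : ℝ) - (bigVerts s k).card| ≤ 2 * k := by
  induction e with | _ x y =>
  have hsub : bigVerts s k ⊆ bigVerts (insert s(x, y) s) k := fun v hv =>
    mem_bigVerts.2 ((mem_bigVerts.1 hv).trans
      (Finset.card_le_card (cluster_mono (Finset.subset_insert _ _) v)))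
  have hnew : (bigVerts (insert s(x, y) s) k \ bigVerts s k).card ≤ 2 * k := by
    refine (Finset.card_le_card (bigVerts_insert_sdiff_subset s k x y)).trans
      ((Finset.card_biUnion_le_card_mul _ _ k fun z hz => (Finset.mem_filter.1 hz).2.le).trans ?_)
    exact Nat.mul_le_mul_right k ((Finset.card_filter_le _ _).trans Finset.card_le_two)
  rw [← Nat.cast_sub (Finset.card_le_card hsub), ← Finset.card_sdiff_of_subset hsub, Nat.abs_cast]
  exact_mod_cast hnew

lemma card_le_card_mul_of_subset_edgeSet {G : SimpleGraph α} {Δ : ℕ}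
    (hΔ : ∀ v, (G.neighborSet v).ncard ≤ Δ) {F : Finset (Sym2 α)}
    (hF : (F : Set (Sym2 α)) ⊆ G.edgeSet) : F.card ≤ Fintype.card α * Δ := by
  have hdeg : ∑ v, G.degree v ≤ Fintype.card α * Δ := by
    refine Finset.sum_le_card_nsmul _ _ _ fun v _ => ?_
    rw [← SimpleGraph.card_neighborSet_eq_degree, ← Nat.card_eq_fintype_card]
    exact hΔ v
  have hFE : F.card ≤ G.edgeFinset.card :=
    Finset.card_le_card fun e he => SimpleGraph.mem_edgeFinset.2 (hF he)
  rw [G.sum_degrees_eq_twice_card_edges] at hdeg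
  lia

lemma le_subsetExp_card_bigVerts {F : Finset (Sym2 α)} {X : Finset α} {k : ℕ} {p q : ℝ}
    (hp₀ : 0 ≤ p) (hp₁ : p ≤ 1)
    (hq : ∀ v ∉ X, q ≤ subsetProb F p fun s => k ≤ (cluster s v).card) :
    (Fintype.card α - X.card) * q ≤ subsetExp F p fun s => ((bigVerts s k).card : ℝ) := by
  have hsum : (subsetExp F p fun s => ((bigVerts s k).card : ℝ)) =
      ∑ v, subsetProb F p fun s => k ≤ (cluster s v).card := by
    simp only [subsetProb, ← subsetExp_sum]
    refine subsetExp_congr fun s _ => ?_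
    rw [bigVerts, Finset.natCast_card_filter]
    congr!
  rw [hsum, ← Nat.cast_sub (Finset.card_le_univ X), ← Finset.card_compl, ← nsmul_eq_mul]
  exact (Finset.card_nsmul_le_sum _ _ _ fun v hv => hq v (Finset.mem_compl.1 hv)).trans
    (Finset.sum_le_sum_of_subset_of_nonneg (Finset.subset_univ _) fun v _ _ =>
      subsetProb_nonneg F hp₀ hp₁ _)

lemma subsetProb_card_bigVerts_lt_le {G : SimpleGraph α} {k d Δ : ℕ} (hk : 1 ≤ k)
    (hgirth : (k : ℕ∞) < G.egirth) (hd₀ : 1 ≤ d) (hd : ∀ v, d ≤ (G.neighborSet v).ncard)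
    (hΔ : ∀ v, (G.neighborSet v).ncard ≤ Δ) {F M : Finset (Sym2 α)}
    (hF : (F : Set (Sym2 α)) ⊆ G.edgeSet) (hFM : G.edgeSet ⊆ F ∪ M)
    (hM : 4 * (Δ + 1) ^ k * M.card ≤ Fintype.card α) {p r : ℝ} (hp₀ : 0 ≤ p) (hp₁ : p ≤ 1)
    (hr₀ : 0 ≤ r) (hr₁ : r ≤ 1) (hr : p * r ^ (d - 1) + (1 - p) ≤ r) :
    subsetProb F p (fun s => ((bigVerts s k).card : ℝ) < (1 - r) / 4 * Fintype.card α) ≤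
      Real.exp (-((1 - r) ^ 2 / (32 * Δ * k ^ 2) * Fintype.card α)) := by
  rcases isEmpty_or_nonempty α with hα | hα
  · simpa using subsetProb_le_one F hp₀ hp₁ _
  have hΔ₀ : (0 : ℝ) < Δ := by
    obtain ⟨v⟩ := hα
    exact_mod_cast (hd₀.trans (hd v)).trans (hΔ v)
  have : (0 : ℝ) < Fintype.card α := by exact_mod_cast Fintype.card_pos
  have : (0 : ℝ) < k := by exact_mod_cast hk
  let X := (closedNbhd G)^[k] (M.biUnion Sym2.toFinset)
  have hXcard : (X.card : ℝ) ≤ Fintype.card α / 2 := by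
    have : X.card ≤ (Δ + 1) ^ k * (M.card * 2) := (card_closedNbhd_iterate_le hΔ k _).trans
      (Nat.mul_le_mul_left _ (card_biUnion_toFinset_le M))
    rw [le_div_iff₀ two_pos]
    exact_mod_cast (Nat.mul_le_mul_right 2 this).trans (le_trans (by lia) hM)
  have hFT : ∀ ⦃x y⦄, G.Adj x y → x ∉ M.biUnion Sym2.toFinset → s(x, y) ∈ F := by
    intro x y hxy hx
    refine (hFM hxy).resolve_right fun he => hx (Finset.mem_biUnion.2 ⟨_, he, ?_⟩)
    simp
  have hmean := le_subsetExp_card_bigVerts hp₀ hp₁ fun v (hv : v ∉ X) =>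
    one_sub_le_subsetProb_le_card_cluster hgirth hd₀ hd hF hFT hv hp₀ hp₁ hr₀ hr₁ hr
  have hσ : F.card * (2 * (k : ℝ)) ^ 2 ≤ Fintype.card α * Δ * (2 * k) ^ 2 := by
    gcongr
    exact_mod_cast card_le_card_mul_of_subset_edgeSet hΔ hF
  refine (subsetProb_lt_le_exp (x := (1 - r) / 4 * Fintype.card α) hp₀ hp₁
    (fun e _ s _ => abs_card_bigVerts_insert_sub_le s k e) (by positivity) hσ
    (by have := sub_nonneg.2 hr₁; positivity) ?_).trans_eq ?_
  · refine le_trans ?_ hmean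
    nlinarith [sub_nonneg.2 hr₁]
  · congr 1
    field_simp
    ring

end FirstRound

section Sprinkling

variable {α : Type*} [Fintype α]

lemma card_image_cluster_mul_le (s : Finset (Sym2 α)) (k : ℕ) :
    k * ((bigVerts s k).image (cluster s)).card ≤ Fintype.card α := by
  refine (Finset.mul_card_image_le_card (bigVerts s k) k fun C hC => ?_).trans
    (Finset.card_le_univ _)
  obtain ⟨v, hv, rfl⟩ := Finset.mem_image.1 hC
  rw [mem_bigVerts] at hv
  refine hv.trans (Finset.card_le_card fun u hu => ?_)
  have hcl := cluster_eq_of_mem hu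
  exact Finset.mem_filter.2 ⟨mem_bigVerts.2 (hcl ▸ hv), hcl⟩

lemma two_pow_card_image_cluster_le (s : Finset (Sym2 α)) {k : ℕ} (hk : 1 ≤ k) :
    (2 : ℝ) ^ ((bigVerts s k).image (cluster s)).card ≤
      Real.exp (Real.log 2 / k * Fintype.card α) := by
  have hk₀ : (0 : ℝ) < k := by exact_mod_cast hk
  have hcard : (k : ℝ) * ((bigVerts s k).image (cluster s)).card ≤ Fintype.card α := by
    exact_mod_cast card_image_cluster_mul_le s k
  rw [← Real.exp_log (pow_pos two_pos _), Real.log_pow, Real.exp_le_exp, div_mul_eq_mul_div,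
    le_div_iff₀ hk₀]
  nlinarith [Real.log_nonneg one_le_two]

/-- The split is by clusters of `s ∪ t`, and is then recorded as a set of clusters of `s`, which
does not depend on `t`, so that a union bound over the second round applies. -/
lemma exists_not_connects_of_card_cluster_lt {s t : Finset (Sym2 α)} {U : Finset α} {a : ℝ}
    (ha : 0 ≤ a) (hU : 3 * a ≤ U.card) (hsmall : ∀ v, ((cluster (s ∪ t) v).card : ℝ) < a) :
    ∃ D ⊆ U.image (cluster s), a ≤ (U.filter (cluster s · ∈ D)).card ∧
      a ≤ (U.filter (cluster s · ∉ D)).card ∧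
      ¬Connects t (U.filter (cluster s · ∈ D)) (U.filter (cluster s · ∉ D)) := by
  obtain ⟨D', hD', hD'c⟩ := exists_balanced_split (cluster (s ∪ t)) ha hU fun C => by
    rcases (U.filter (cluster (s ∪ t) · = C)).eq_empty_or_nonempty with h | ⟨v, hv⟩
    · rwa [h, Finset.card_empty, Nat.cast_zero]
    · obtain ⟨-, rfl⟩ := Finset.mem_filter.1 hv
      refine le_trans ?_ (hsmall v).le
      refine Nat.cast_le.2 (Finset.card_le_card fun u hu => ?_)
      rw [← (Finset.mem_filter.1 hu).2]
      exact mem_cluster.2 (.refl u)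
  let D := (U.filter (cluster (s ∪ t) · ∈ D')).image (cluster s)
  have hD : ∀ u ∈ U, cluster s u ∈ D ↔ cluster (s ∪ t) u ∈ D' := by
    intro u hu
    refine ⟨fun h => ?_, fun h => Finset.mem_image_of_mem _ (Finset.mem_filter.2 ⟨hu, h⟩)⟩
    obtain ⟨w, hw, hwu⟩ := Finset.mem_image.1 h
    have huw : u ∈ cluster (s ∪ t) w :=
      cluster_mono Finset.subset_union_left w (hwu ▸ mem_cluster.2 (.refl u))
    exact cluster_eq_of_mem huw ▸ (Finset.mem_filter.1 hw).2
  refine ⟨D, Finset.image_subset_image (Finset.filter_subset _ _), ?_⟩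
  rw [Finset.filter_congr hD, Finset.filter_congr fun u hu => not_congr (hD u hu)]
  refine ⟨hD', hD'c, ?_⟩
  rintro ⟨x, hx, y, hy, hxy⟩
  have hcl : cluster (s ∪ t) y = cluster (s ∪ t) x :=
    cluster_eq_of_mem (mem_cluster.2 (hxy.mono (openGraph_mono Finset.subset_union_right)))
  exact (Finset.mem_filter.1 hy).2 (hcl ▸ (Finset.mem_filter.1 hx).2)

lemma subsetProb_forall_card_cluster_union_lt_le {F s : Finset (Sym2 α)} {p a q : ℝ} {k : ℕ}
    (hp₀ : 0 ≤ p) (hp₁ : p ≤ 1) (hk : 1 ≤ k) (ha : 0 ≤ a) (hs : 3 * a ≤ (bigVerts s k).card)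
    (hq₀ : 0 ≤ q) (hq : ∀ A B : Finset α, Disjoint A B → a ≤ A.card → a ≤ B.card →
      subsetProb F p (fun t => ¬Connects t A B) ≤ q) :
    subsetProb F p (fun t => ∀ v, ((cluster (s ∪ t) v).card : ℝ) < a) ≤
      Real.exp (Real.log 2 / k * Fintype.card α) * q := by
  let U := bigVerts s k
  let inside (D : Finset (Finset α)) := U.filter (cluster s · ∈ D)
  let outside (D : Finset (Finset α)) := U.filter (cluster s · ∉ D)
  let T := (U.image (cluster s)).powerset.filter fun D =>
    a ≤ ((inside D).card : ℝ) ∧ a ≤ ((outside D).card : ℝ)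
  have hT : (T.card : ℝ) ≤ 2 ^ (U.image (cluster s)).card := by
    exact_mod_cast (Finset.card_filter_le _ _).trans_eq (Finset.card_powerset _)
  calc
    _ ≤ subsetProb F p fun t => ∃ D ∈ T, ¬Connects t (inside D) (outside D) :=
      subsetProb_mono hp₀ hp₁ fun t _ hsmall => by
        obtain ⟨D, hD, hin, hout, hconn⟩ := exists_not_connects_of_card_cluster_lt ha hs hsmall
        exact ⟨D, Finset.mem_filter.2 ⟨Finset.mem_powerset.2 hD, hin, hout⟩, hconn⟩
    _ ≤ ∑ D ∈ T, subsetProb F p fun t => ¬Connects t (inside D) (outside D) :=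
      subsetProb_exists_le T F hp₀ hp₁ _
    _ ≤ T.card • q := Finset.sum_le_card_nsmul _ _ _ fun D hD => by
      obtain ⟨-, hin, hout⟩ := Finset.mem_filter.1 hD
      exact hq _ _ (Finset.disjoint_filter_filter_not _ _ _) hin hout
    _ = T.card * q := nsmul_eq_mul _ _
    _ ≤ _ := mul_le_mul_of_nonneg_right (hT.trans (two_pow_card_image_cluster_le s hk)) hq₀

lemma subsetProb_forall_card_cluster_lt_le {F : Finset (Sym2 α)} {p₁ p₂ a q : ℝ} {k : ℕ}
    (hp₁ : 0 ≤ p₁) (hp₁' : p₁ ≤ 1) (hp₂ : 0 ≤ p₂) (hp₂' : p₂ ≤ 1) (hk : 1 ≤ k) (ha : 0 ≤ a)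
    (hq₀ : 0 ≤ q) (hq : ∀ A B : Finset α, Disjoint A B → a ≤ A.card → a ≤ B.card →
      subsetProb F p₂ (fun t => ¬Connects t A B) ≤ q) :
    subsetProb F (1 - (1 - p₁) * (1 - p₂)) (fun s => ∀ v, ((cluster s v).card : ℝ) < a) ≤
      subsetProb F p₁ (fun s => ((bigVerts s k).card : ℝ) < 3 * a) +
        Real.exp (Real.log 2 / k * Fintype.card α) * q :=
  subsetProb_sprinkle_le hp₁ hp₁' hp₂ hp₂' (by positivity) fun _ _ hs =>
    subsetProb_forall_card_cluster_union_lt_le hp₂ hp₂' hk ha (not_lt.1 hs) hq₀ hq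

end Sprinkling

section Expanders

variable {α : Type*} [Fintype α]

lemma exists_matching_card_eq {G : SimpleGraph α} {Δ : ℕ}
    (hG : ∀ v, (G.neighborSet v).Nonempty) (hΔ : ∀ v, (G.neighborSet v).ncard ≤ Δ) {N : ℕ}
    (hN : 2 * (Δ + 1) * N ≤ Fintype.card α) :
    ∃ M : Finset (Sym2 α), (M : Set (Sym2 α)) ⊆ G.edgeSet ∧
      (∀ e ∈ M, ∀ f ∈ M, e ≠ f → ∀ v, ¬(v ∈ e ∧ v ∈ f)) ∧ M.card = N := by
  obtain ⟨M, hcard, hM, hdisj⟩ := exists_pairwiseDisjoint_of_avoiding Sym2.toFinset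
    (· ∈ G.edgeSet) 2 N fun X hX => by
      have hnbhd : (closedNbhd G X).card < (Finset.univ : Finset α).card := by
        refine (card_closedNbhd_le hΔ X).trans_lt (lt_of_lt_of_le ?_ hN)
        calc
          (Δ + 1) * X.card < (Δ + 1) * (2 * N) := Nat.mul_lt_mul_of_pos_left (by lia) (by lia)
          _ = 2 * (Δ + 1) * N := by ring
      obtain ⟨v, -, hv⟩ := Finset.exists_mem_notMem_of_card_lt_card hnbhd
      obtain ⟨w, hvw⟩ := hG v
      rw [SimpleGraph.mem_neighborSet] at hvw
      simp only [mem_closedNbhd, not_or, not_exists, not_and] at hv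
      refine ⟨s(v, w), hvw, ⟨v, by simp⟩, ?_, ?_⟩
      · exact (Sym2.card_toFinset_of_not_isDiag _ (by simpa using hvw.ne)).le
      · simp only [Finset.disjoint_left, Sym2.mem_toFinset, Sym2.ball]
        exact ⟨hv.1, fun hwX => hv.2 w hwX hvw.symm⟩
  refine ⟨M, fun e he => (hM e he).1, fun e he f hf hef v hv => ?_, hcard⟩
  exact Finset.disjoint_left.1 (hdisj he hf hef) (Sym2.mem_toFinset.2 hv.1)
    (Sym2.mem_toFinset.2 hv.2)

lemma cutEdges_compl [DecidableEq α] (F : Finset (Sym2 α)) (S : Finset α) :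
    cutEdges F Sᶜ = cutEdges F S := by
  ext e
  simp only [mem_cutEdges, Finset.mem_compl, not_not]
  refine and_congr_right fun _ => ⟨?_, ?_⟩ <;>
  · rintro ⟨x, hx, y, hy, rfl⟩
    exact ⟨y, hy, x, hx, Sym2.eq_swap⟩

lemma coe_edgeFinset' {W : Type} [Fintype W] (G : SimpleGraph W) :
    (edgeFinset' G : Set (Sym2 W)) = G.edgeSet := by
  simp [edgeFinset']

lemma card_cutEdges_edgeFinset' (G : SimpleGraph V) (S : Finset V) :
    (cutEdges (edgeFinset' G) S).card = cutCard G S := by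
  unfold cutEdges cutCard
  congr!

namespace IsExpander

variable {G : SimpleGraph V} {b : ℝ} {Δ : ℕ}

lemma mul_le_card_cutEdges (hG : IsExpander G b Δ) (hb : 0 ≤ b) {a : ℝ} {A B S : Finset V}
    (hA : a ≤ A.card) (hB : a ≤ B.card) (hAS : A ⊆ S) (hSB : Disjoint S B) :
    b * a ≤ (cutEdges (edgeFinset' G) S).card := by
  rcases le_total (S.card : ℝ) (Fintype.card V / 2) with h | h
  · rw [card_cutEdges_edgeFinset']
    refine (mul_le_mul_of_nonneg_left (hA.trans ?_) hb).trans (hG.2 S h)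
    exact_mod_cast Finset.card_le_card hAS
  · rw [← cutEdges_compl, card_cutEdges_edgeFinset']
    have hcompl : (Sᶜ.card : ℝ) = Fintype.card V - S.card := by
      rw [Finset.card_compl, Nat.cast_sub (Finset.card_le_univ S)]
    refine (mul_le_mul_of_nonneg_left (hB.trans ?_) hb).trans (hG.2 Sᶜ (by linarith))
    exact_mod_cast Finset.card_le_card hSB.symm.le_compl_right

lemma subsetProb_not_connects_le [Nonempty V] (hG : IsExpander G b Δ) (hb : 0 ≤ b)
    {F M : Finset (Sym2 V)} (hF : (F : Set (Sym2 V)) ⊆ G.edgeSet) (hFM : G.edgeSet ⊆ F ∪ M)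
    {p η : ℝ} {L : ℕ} (hp₀ : 0 ≤ p) (hp₁ : p ≤ 1) (hM : M.card ≤ b * η / 2 * Fintype.card V)
    (hL : 4 * Δ < L * (b * η)) {A B : Finset V} (hAB : Disjoint A B)
    (hA : η * Fintype.card V ≤ A.card) (hB : η * Fintype.card V ≤ B.card) :
    subsetProb F p (fun t => ¬Connects t A B) ≤
      Real.exp (-(p ^ L * (b * η) / (4 * L) * Fintype.card V)) := by
  have hn : (0 : ℝ) < Fintype.card V := by exact_mod_cast Fintype.card_pos
  have hcut : ∀ S, A ⊆ S → Disjoint S B →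
      b * η / 2 * Fintype.card V ≤ (cutEdges F S).card := by
    intro S hAS hSB
    have hGcut := hG.mul_le_card_cutEdges hb hA hB hAS hSB
    have hFcut : ((cutEdges (edgeFinset' G) S).card : ℝ) ≤ (cutEdges F S).card + M.card := by
      exact_mod_cast card_cutEdges_le_add_card (by rwa [coe_edgeFinset']) S
    linarith
  have hcard : (F.card : ℝ) ≤ Fintype.card V * Δ := by
    exact_mod_cast card_le_card_mul_of_subset_edgeSet hG.1 hF
  have hconn := Percolation.subsetProb_not_connects_le hp₀ hp₁ hAB hcut (L := L)
    (hcard.trans_lt (by nlinarith))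
  exact hconn.trans_eq (by ring_nf)

end IsExpander

end Expanders

section GiantComponent

lemma card_le_of_le_girth {α : Type*} [Fintype α] {G : SimpleGraph α} {R : ℕ} (hR : 0 < R)
    (hG : R ≤ G.girth) : R ≤ Fintype.card α := by
  have hcycle : ¬G.IsAcyclic := fun h => by
    rw [SimpleGraph.girth_eq_zero.2 h] at hG
    lia
  obtain ⟨v, w, hw, hlength⟩ := SimpleGraph.exists_girth_eq_length.2 hcycle
  calc
    R ≤ w.support.tail.length := by simpa [← hlength] using hG
    _ ≤ Fintype.card α := hw.support_nodup.length_le_card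

lemma exists_matching_mul_le_card_le {α : Type*} [Fintype α] {G : SimpleGraph α} {Δ : ℕ}
    (hG : ∀ v, (G.neighborSet v).Nonempty) (hΔ : ∀ v, (G.neighborSet v).ncard ≤ Δ) {δ : ℝ}
    (hδ : 4 * (Δ + 1) * δ ≤ 1) (hn : 1 ≤ δ * Fintype.card α) :
    ∃ M : Finset (Sym2 α), (M : Set (Sym2 α)) ⊆ G.edgeSet ∧
      (∀ e ∈ M, ∀ f ∈ M, e ≠ f → ∀ v, ¬(v ∈ e ∧ v ∈ f)) ∧
      δ * Fintype.card α ≤ M.card ∧ M.card ≤ 2 * δ * Fintype.card α := by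
  have hceil : (⌈δ * Fintype.card α⌉₊ : ℝ) ≤ 2 * δ * Fintype.card α := by
    linarith [Nat.ceil_lt_add_one (zero_le_one.trans hn)]
  have hN : (2 * (Δ + 1) * ⌈δ * Fintype.card α⌉₊ : ℝ) ≤ Fintype.card α := by
    calc
      _ ≤ 2 * (Δ + 1) * (2 * δ * Fintype.card α) := by gcongr
      _ = 4 * (Δ + 1) * δ * Fintype.card α := by ring
      _ ≤ Fintype.card α := mul_le_of_le_one_left (Nat.cast_nonneg _) hδ
  obtain ⟨M, hMG, hM, hcard⟩ := exists_matching_card_eq hG hΔ (by exact_mod_cast hN)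
  exact ⟨M, hMG, hM, hcard ▸ Nat.le_ceil _, hcard ▸ hceil⟩

lemma exists_sprinkle_parameters {p q : ℝ} (hqp : q < p) (hp : p ≤ 1) :
    ∃ p₁ p₂ : ℝ, q < p₁ ∧ p₁ < 1 ∧ 0 < p₂ ∧ p₂ ≤ 1 ∧ 1 - (1 - p₁) * (1 - p₂) = p := by
  obtain ⟨p₁, hq, hp₁⟩ := exists_between hqp
  have hpos : 0 < 1 - p₁ := by linarith
  refine ⟨p₁, (p - p₁) / (1 - p₁), hq, by linarith, div_pos (by linarith) hpos, ?_, ?_⟩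
  · rw [div_le_one hpos]
    linarith
  · field_simp
    ring

lemma mul_pow_add_one_sub_le {m : ℕ} (hm : 1 ≤ m) {p : ℝ} (hp : 1 / (m : ℝ) ≤ p) (hp₁ : p ≤ 1) :
    p * (1 - (p - 1 / m)) ^ m + (1 - p) ≤ 1 - (p - 1 / m) := by
  have hm₀ : (0 : ℝ) < m := by exact_mod_cast hm
  have hinv : 0 < 1 / (m : ℝ) := by positivity
  set θ := p - 1 / (m : ℝ) with hθ
  have hpm : p * m = 1 + m * θ := by rw [hθ]; field_simp; ring
  have hbern : (1 - θ) ^ m * (1 + m * θ) ≤ 1 := by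
    calc
      (1 - θ) ^ m * (1 + m * θ) ≤ (1 - θ) ^ m * (1 + θ) ^ m := by
        exact mul_le_mul_of_nonneg_left (one_add_mul_le_pow (by linarith) m)
          (pow_nonneg (by linarith) m)
      _ = ((1 - θ) * (1 + θ)) ^ m := (mul_pow _ _ _).symm
      _ ≤ 1 := pow_le_one₀ (mul_nonneg (by linarith) (by linarith)) (by nlinarith)
  have hpow : p * (1 - θ) ^ m ≤ 1 / m := by
    rw [le_div_iff₀ hm₀]
    calc
      p * (1 - θ) ^ m * m = (1 - θ) ^ m * (p * m) := by ring
      _ ≤ 1 := hpm ▸ hbern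
  linarith

lemma exists_mul_pow_add_one_sub_le {d : ℕ} (hd : 2 ≤ d) {p : ℝ} (hp : 1 / ((d : ℝ) - 1) < p)
    (hp₁ : p ≤ 1) :
    ∃ ε > 0, 12 * ε ≤ 1 ∧ p * (1 - 12 * ε) ^ (d - 1) + (1 - p) ≤ 1 - 12 * ε := by
  have hcast : ((d - 1 : ℕ) : ℝ) = d - 1 := by rw [Nat.cast_sub (by lia), Nat.cast_one]
  rw [← hcast] at hp
  have hinv : 0 ≤ 1 / ((d - 1 : ℕ) : ℝ) := by positivity
  refine ⟨(p - 1 / (d - 1 : ℕ)) / 12, by linarith, by linarith, ?_⟩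
  rw [mul_div_cancel₀ _ (by norm_num)]
  exact mul_pow_add_one_sub_le (by lia) hp.le hp₁

lemma exists_log_two_div_le {γ : ℝ} (hγ : 0 < γ) : ∃ k : ℕ, 1 ≤ k ∧ Real.log 2 / k ≤ γ := by
  obtain ⟨k, hk⟩ := exists_nat_gt (Real.log 2 / γ)
  have hk₀ : (0 : ℝ) < k := lt_of_le_of_lt (by positivity) hk
  refine ⟨k, by exact_mod_cast hk₀, ?_⟩
  rw [div_lt_iff₀ hγ] at hk
  rw [div_le_iff₀ hk₀]
  linarith

lemma compVerts_fromEdgeSet {W : Type} [Fintype W] (s : Finset (Sym2 W)) (v : W) :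
    compVerts (SimpleGraph.fromEdgeSet (s : Set (Sym2 W)))
      ((SimpleGraph.fromEdgeSet (s : Set (Sym2 W))).connectedComponentMk v) = cluster s v := by
  ext u
  rw [mem_cluster, compVerts, Finset.mem_filter, SimpleGraph.ConnectedComponent.eq]
  exact ⟨fun h => h.2.symm, fun h => ⟨Finset.mem_univ _, h.symm⟩⟩

lemma percProb_exists_le_card_compVerts {W : Type} [Fintype W] (G : SimpleGraph W) (p a : ℝ) :
    percProb G p (fun H => ∃ C : H.ConnectedComponent, a ≤ (compVerts H C).card) =
      1 - subsetProb (edgeFinset' G) p (fun s => ∀ v, ((cluster s v).card : ℝ) < a) := by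
  rw [← subsetProb_not]
  refine subsetExp_congr fun s _ => ?_
  congr 1
  simp only [not_forall, not_lt, eq_iff_iff]
  constructor
  · rintro ⟨C, hC⟩
    induction C using SimpleGraph.ConnectedComponent.ind with
    | h v => exact ⟨v, compVerts_fromEdgeSet s v ▸ hC⟩
  · rintro ⟨v, hv⟩
    exact ⟨_, (compVerts_fromEdgeSet s v).symm ▸ hv⟩

namespace IsExpander

lemma subsetProb_forall_card_cluster_lt_le [Nonempty V] {G : SimpleGraph V} {b : ℝ} {Δ d k : ℕ}
    (hG : IsExpander G b Δ) (hb : 0 ≤ b) (hd₀ : 1 ≤ d) (hd : ∀ v, d ≤ (G.neighborSet v).ncard)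
    (hk : 1 ≤ k) (hgirth : (k : ℕ∞) < G.egirth) {F M : Finset (Sym2 V)}
    (hF : (F : Set (Sym2 V)) ⊆ G.edgeSet) (hFM : G.edgeSet ⊆ F ∪ M) {p₁ p₂ ε : ℝ} {L : ℕ}
    (hp₁ : 0 ≤ p₁) (hp₁' : p₁ ≤ 1) (hp₂ : 0 ≤ p₂) (hp₂' : p₂ ≤ 1) (hε₀ : 0 ≤ ε)
    (hε₁ : 12 * ε ≤ 1) (hε : p₁ * (1 - 12 * ε) ^ (d - 1) + (1 - p₁) ≤ 1 - 12 * ε)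
    (hL : 4 * Δ < L * (b * ε)) (hM : M.card ≤ b * ε / 2 * Fintype.card V)
    (hMk : 4 * (Δ + 1) ^ k * M.card ≤ Fintype.card V) :
    subsetProb F (1 - (1 - p₁) * (1 - p₂))
        (fun s => ∀ v, ((cluster s v).card : ℝ) < ε * Fintype.card V) ≤
      Real.exp (-((12 * ε) ^ 2 / (32 * Δ * k ^ 2) * Fintype.card V)) +
        Real.exp (Real.log 2 / k * Fintype.card V) *
          Real.exp (-(p₂ ^ L * (b * ε) / (4 * L) * Fintype.card V)) := by
  refine (Percolation.subsetProb_forall_card_cluster_lt_le hp₁ hp₁' hp₂ hp₂' hk (by positivity)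
    (Real.exp_pos _).le fun A B hAB hA hB =>
      hG.subsetProb_not_connects_le hb hF hFM hp₂ hp₂' hM hL hAB hA hB).trans ?_
  have hfirst := subsetProb_card_bigVerts_lt_le hk hgirth hd₀ hd hG.1 hF hFM hMk hp₁ hp₁'
    (by linarith) (by linarith) hε
  rw [sub_sub_cancel, show 12 * ε / 4 * (Fintype.card V : ℝ) = 3 * (ε * Fintype.card V) by ring]
    at hfirst
  gcongr

lemma exists_le_percProb_deleteEdges {b : ℝ} (hb : 0 < b) {d Δ : ℕ} (hd : 2 ≤ d) (hΔ : 1 ≤ Δ)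
    {p : ℝ} (hp : 1 / ((d : ℝ) - 1) < p) (hp₁ : p ≤ 1) :
    ∃ c > (0 : ℝ), ∃ η > (0 : ℝ), ∃ ε > (0 : ℝ), ∃ k : ℕ,
      ∀ (V : Type) [Fintype V] [DecidableEq V] [Nonempty V] (G : SimpleGraph V)
        (M : Finset (Sym2 V)), IsExpander G b Δ → (∀ v, d ≤ (G.neighborSet v).ncard) →
        (k : ℕ∞) < G.egirth → M.card ≤ η * Fintype.card V →
        1 - 2 * Real.exp (-c * Fintype.card V) ≤
          percProb (G.deleteEdges M) p fun H =>
            ∃ C : H.ConnectedComponent, ε * Fintype.card V ≤ (compVerts H C).card := by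
  obtain ⟨p₁, p₂, hdp₁, hp₁', hp₂, hp₂', rfl⟩ := exists_sprinkle_parameters hp hp₁
  have hp₁₀ : 0 ≤ p₁ := by
    have hd' : (2 : ℝ) ≤ d := by exact_mod_cast hd
    exact (one_div_nonneg.2 (by linarith)).trans hdp₁.le
  obtain ⟨ε, hε₀, hε₁, hε⟩ := exists_mul_pow_add_one_sub_le hd hdp₁ hp₁'.le
  obtain ⟨L, hL⟩ := exists_nat_gt (4 * Δ / (b * ε))
  have hL₀ : (0 : ℝ) < L := lt_of_le_of_lt (by positivity) hL
  rw [div_lt_iff₀ (by positivity)] at hL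
  set γ := p₂ ^ L * (b * ε) / (4 * L)
  have hγ₀ : 0 < γ := by positivity
  obtain ⟨k, hk, hkγ⟩ := exists_log_two_div_le (half_pos hγ₀)
  refine ⟨min ((12 * ε) ^ 2 / (32 * Δ * k ^ 2)) (γ / 2), by positivity,
    min (b * ε / 2) (1 / (4 * (Δ + 1) ^ k)), by positivity, ε, hε₀, k, ?_⟩
  intro V _ _ _ G M hG hdeg hgirth hM
  have hMb : M.card ≤ b * ε / 2 * Fintype.card V := hM.trans (by gcongr; exact min_le_left _ _)
  have hMk : (4 * (Δ + 1) ^ k * M.card : ℝ) ≤ Fintype.card V := by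
    rw [← le_div_iff₀' (by positivity), div_eq_inv_mul, ← one_div]
    exact hM.trans (by gcongr; exact min_le_right _ _)
  have hbound := hG.subsetProb_forall_card_cluster_lt_le hb.le (by lia) hdeg hk hgirth
    (F := edgeFinset' (G.deleteEdges M)) (M := M) (by simp [coe_edgeFinset'])
    (by simp [coe_edgeFinset']) hp₁₀ hp₁'.le hp₂.le hp₂' hε₀.le hε₁ hε hL hMb
    (by exact_mod_cast hMk)
  rw [percProb_exists_le_card_compVerts]
  refine sub_le_sub_left (hbound.trans ?_) 1
  rw [← Real.exp_add, two_mul]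
  gcongr
  · rw [neg_mul]
    gcongr
    exact min_le_left _ _
  · linarith [mul_le_mul_of_nonneg_right hkγ (Nat.cast_nonneg (α := ℝ) (Fintype.card V)),
      mul_le_mul_of_nonneg_right (min_le_right ((12 * ε) ^ 2 / (32 * Δ * k ^ 2)) (γ / 2))
        (Nat.cast_nonneg (α := ℝ) (Fintype.card V))]

end IsExpander

end GiantComponent

theorem expander_minus_matching_keeps_giant_general (b : ℝ) (hb : 0 < b) (d Δ : ℕ) (hd : 3 ≤ d)
    (p : ℝ) (hp : 1 / ((d : ℝ) - 1) < p) (hp1 : p ≤ 1) :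
    ∃ c > (0:ℝ), ∃ C > (0:ℝ), ∃ δ > (0:ℝ), ∃ ε > (0:ℝ), ∃ R : ℕ, 0 < R ∧
      ∀ (V : Type) [Fintype V] [DecidableEq V] (G : SimpleGraph V),
        IsExpander G b Δ → (∀ v, d ≤ (G.neighborSet v).ncard) → (R : ℕ∞) ≤ G.girth →
        ∃ M : Finset (Sym2 V), (↑M : Set (Sym2 V)) ⊆ G.edgeSet ∧
          (∀ e ∈ M, ∀ f ∈ M, e ≠ f → ∀ v : V, ¬(v ∈ e ∧ v ∈ f)) ∧
          δ * Fintype.card V ≤ M.card ∧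
          1 - C * Real.exp (-c * Fintype.card V) ≤
            percProb (G.deleteEdges ↑M) p (fun H =>
              ∃ comp : H.ConnectedComponent,
                ε * Fintype.card V ≤ ((compVerts H comp).card : ℝ)) := by
  obtain ⟨c, hc, η, hη, ε, hε, k, hgiant⟩ :=
    IsExpander.exists_le_percProb_deleteEdges (Δ := Δ + 1) hb (by lia : 2 ≤ d) (by lia) hp hp1
  let δ := min (η / 2) (1 / (4 * (Δ + 1)))
  have hδ : 0 < δ := by positivity
  refine ⟨c, hc, 2, two_pos, δ, hδ, ε, hε, max (k + 1) ⌈1 / δ⌉₊, by positivity, ?_⟩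
  intro V _ _ G hG hdeg hgirth
  have hgirth' : max (k + 1) ⌈1 / δ⌉₊ ≤ G.girth := by exact_mod_cast hgirth
  obtain ⟨hkn, hδn⟩ := max_le_iff.1 (card_le_of_le_girth (by positivity) hgirth')
  have : Nonempty V := Fintype.card_pos_iff.1 (by lia)
  rw [Nat.ceil_le, div_le_iff₀' hδ] at hδn
  obtain ⟨M, hMG, hM, hle, hge⟩ := exists_matching_mul_le_card_le (G := G)
    (fun v => Set.nonempty_of_ncard_ne_zero (by have := hdeg v; lia)) hG.1 (δ := δ) (by
      rw [← le_div_iff₀' (by positivity)]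
      exact min_le_right _ _) hδn
  refine ⟨M, hMG, hM, hle, hgiant V G M ⟨fun v => (hG.1 v).trans Δ.le_succ, hG.2⟩ hdeg ?_ ?_⟩
  · exact lt_of_lt_of_le (by exact_mod_cast (le_max_left _ _).trans hgirth')
      (ENat.natCast_toNat_le_self G.egirth)
  · refine hge.trans ?_
    gcongr
    linarith [min_le_left (η / 2) (1 / (4 * ((Δ : ℝ) + 1)))]

theorem expander_minus_matching_keeps_giant (b : ℝ) (hb : 0 < b) (d : ℕ) (hd : 3 ≤ d)
    (p : ℝ) (hp : 1 / ((d : ℝ) - 1) < p) (hp1 : p < 1) :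
    ∃ c > (0:ℝ), ∃ C > (0:ℝ), ∃ δ > (0:ℝ), ∃ ε > (0:ℝ), ∃ R : ℕ, 0 < R ∧
      ∀ (V : Type) [Fintype V] [DecidableEq V] (G : SimpleGraph V),
        IsRegularExpander G b d → (R : ℕ∞) ≤ G.girth →
        ∃ M : Finset (Sym2 V), (↑M : Set (Sym2 V)) ⊆ G.edgeSet ∧
          (∀ e ∈ M, ∀ f ∈ M, e ≠ f → ∀ v : V, ¬(v ∈ e ∧ v ∈ f)) ∧
          δ * Fintype.card V ≤ M.card ∧
          1 - C * Real.exp (-c * Fintype.card V) ≤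
            percProb (G.deleteEdges ↑M) p (fun H =>
              ∃ comp : H.ConnectedComponent,
                ε * Fintype.card V ≤ ((compVerts H comp).card : ℝ)) := by
  have ⟨c, hc, C, hC, δ, hδ, ε, hε, R, hR, h⟩ :=
    expander_minus_matching_keeps_giant_general b hb d d hd p hp hp1.le
  exact ⟨c, hc, C, hC, δ, hδ, ε, hε, R, hR, fun V _ _ G hG => h V G hG.1 fun v => (hG.2 v).ge⟩

end Percolation

end
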